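/- arXiv:2206.10577 — 4 statements merged into one kernel-verified Lean document; each statement's English description precedes it below -/
import Mathlib

section
/- For every 2×2 unitary complex matrix U there exists a unique quadruple of real numbers (β₀, β₁, β₂, β₃) with β₀, β₂, β₃ ∈ [0, 2π), β₁ ∈ [0, π), and β₁ = 0 whenever β₂ ∈ {0, π}, such that U = exp(i·β₀) · P(β₃) · R_X(β₂) · P(β₁). (This is the soundness and uniqueness of the one-qubit Euler-decomposition axiom (q) of the paper.) -/
open Matrix Complex

noncomputable section

/-- The phase gate `P(φ)`. -/
def Pmat (φ : ℝ) : Matrix (Fin 2) (Fin 2) ℂ :=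
  !![1, 0; 0, Complex.exp (φ * Complex.I)]

/-- The X-rotation gate `R_X(θ)`. -/
def RXmat (θ : ℝ) : Matrix (Fin 2) (Fin 2) ℂ :=
  !![(Real.cos (θ / 2) : ℂ), -Complex.I * (Real.sin (θ / 2) : ℂ);
     -Complex.I * (Real.sin (θ / 2) : ℂ), (Real.cos (θ / 2) : ℂ)]

theorem aux_ang (z : ℂ) (hz : ‖z‖ = 1) :
    ∃ θ : ℝ, θ ∈ Set.Ico 0 (2 * Real.pi) ∧ Complex.exp (θ * Complex.I) = z := by
  have h := Complex.norm_mul_exp_arg_mul_I z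
  rw [hz] at h
  simp only [Complex.ofReal_one, one_mul] at h
  have h1 := Complex.neg_pi_lt_arg z
  have h2 := Complex.arg_le_pi z
  have hp := Real.pi_pos
  by_cases h0 : 0 ≤ z.arg
  · exact ⟨z.arg, ⟨h0, by linarith⟩, h⟩
  · refine ⟨z.arg + 2 * Real.pi, ⟨by linarith, by linarith⟩, ?_⟩
    push_cast
    rw [add_mul, Complex.exp_add, Complex.exp_two_pi_mul_I, mul_one, h]

theorem aux_inj (x y : ℝ) (hx : x ∈ Set.Ico 0 (2 * Real.pi)) (hy : y ∈ Set.Ico 0 (2 * Real.pi))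
    (h : Complex.exp (x * Complex.I) = Complex.exp (y * Complex.I)) : x = y := by
  rw [Complex.exp_eq_exp_iff_exists_int] at h
  obtain ⟨n, hn⟩ := h
  have hn' : (x : ℂ) = y + n * (2 * Real.pi) := by
    have := Complex.I_ne_zero
    apply mul_right_cancel₀ this
    rw [hn]; ring
  have hr : x = y + n * (2 * Real.pi) := by exact_mod_cast hn'
  have hp := Real.pi_pos
  obtain ⟨hx0, hx1⟩ := hx
  obtain ⟨hy0, hy1⟩ := hy
  have a1 : (n : ℝ) < 1 := by
    by_contra hc
    push Not at hc
    nlinarith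
  have a2 : (-1 : ℝ) < n := by
    by_contra hc
    push Not at hc
    nlinarith
  have b1 : n < 1 := by exact_mod_cast a1
  have b2 : -1 < n := by exact_mod_cast a2
  have : n = 0 := by omega
  subst this
  simpa using hr

theorem aux_mat (U : Matrix (Fin 2) (Fin 2) ℂ) (b0 b1 b2 b3 : ℝ) :
    U = Complex.exp (b0 * Complex.I) • (Pmat b3 * RXmat b2 * Pmat b1) ↔
    U 0 0 = Complex.exp (b0 * Complex.I) * (Real.cos (b2 / 2) : ℂ) ∧
    U 0 1 = -Complex.I * Complex.exp (b0 * Complex.I) * Complex.exp (b1 * Complex.I)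
      * (Real.sin (b2 / 2) : ℂ) ∧
    U 1 0 = -Complex.I * Complex.exp (b0 * Complex.I) * Complex.exp (b3 * Complex.I)
      * (Real.sin (b2 / 2) : ℂ) ∧
    U 1 1 = Complex.exp (b0 * Complex.I) * Complex.exp (b1 * Complex.I)
      * Complex.exp (b3 * Complex.I) * (Real.cos (b2 / 2) : ℂ) := by
  have key : Complex.exp (b0 * Complex.I) • (Pmat b3 * RXmat b2 * Pmat b1) =
    !![Complex.exp (b0 * Complex.I) * (Real.cos (b2 / 2) : ℂ),
      -Complex.I * Complex.exp (b0 * Complex.I) * Complex.exp (b1 * Complex.I)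
      * (Real.sin (b2 / 2) : ℂ);
      -Complex.I * Complex.exp (b0 * Complex.I) * Complex.exp (b3 * Complex.I)
      * (Real.sin (b2 / 2) : ℂ),
      Complex.exp (b0 * Complex.I) * Complex.exp (b1 * Complex.I)
      * Complex.exp (b3 * Complex.I) * (Real.cos (b2 / 2) : ℂ)] := by
    unfold Pmat RXmat
    simp only [Matrix.mul_fin_two, Matrix.smul_of, Matrix.smul_cons, Matrix.smul_empty,
      smul_eq_mul]
    congr 1
    ext i j
    fin_cases i <;> fin_cases j <;> simp <;> ring
  rw [key]
  constructor
  · intro h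
    rw [h]
    simp
  · rintro ⟨h1, h2, h3, h4⟩
    ext i j
    fin_cases i <;> fin_cases j
    · exact h1
    · exact h2
    · exact h3
    · exact h4

theorem aux_unique (U : Matrix (Fin 2) (Fin 2) ℂ) (b0 b1 b2 b3 g0 g1 g2 g3 : ℝ)
    (hb0 : b0 ∈ Set.Ico 0 (2 * Real.pi)) (hb1 : b1 ∈ Set.Ico 0 Real.pi)
    (hb2 : b2 ∈ Set.Ico 0 (2 * Real.pi)) (hb3 : b3 ∈ Set.Ico 0 (2 * Real.pi))
    (hb : (b2 = 0 ∨ b2 = Real.pi) → b1 = 0)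
    (hUb : U = Complex.exp (b0 * Complex.I) • (Pmat b3 * RXmat b2 * Pmat b1))
    (hg0 : g0 ∈ Set.Ico 0 (2 * Real.pi)) (hg1 : g1 ∈ Set.Ico 0 Real.pi)
    (hg2 : g2 ∈ Set.Ico 0 (2 * Real.pi)) (hg3 : g3 ∈ Set.Ico 0 (2 * Real.pi))
    (hg : (g2 = 0 ∨ g2 = Real.pi) → g1 = 0)
    (hUg : U = Complex.exp (g0 * Complex.I) • (Pmat g3 * RXmat g2 * Pmat g1)) :
    b0 = g0 ∧ b1 = g1 ∧ b2 = g2 ∧ b3 = g3 := by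
  rw [aux_mat] at hUb hUg
  obtain ⟨p1, p2, p3, p4⟩ := hUb
  obtain ⟨q1, q2, q3, q4⟩ := hUg
  rw [p1] at q1
  rw [p2] at q2
  rw [p3] at q3
  rw [p4] at q4
  have hp := Real.pi_pos
  have hsb : 0 ≤ Real.sin (b2 / 2) :=
    Real.sin_nonneg_of_nonneg_of_le_pi (by linarith [hb2.1]) (by linarith [hb2.2])
  have hsg : 0 ≤ Real.sin (g2 / 2) :=
    Real.sin_nonneg_of_nonneg_of_le_pi (by linarith [hg2.1]) (by linarith [hg2.2])
  have hs : Real.sin (b2 / 2) = Real.sin (g2 / 2) := by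
    have := congrArg norm q2
    simp only [norm_mul, norm_neg, Complex.norm_I, Complex.norm_exp_ofReal_mul_I,
      Complex.norm_real, Real.norm_eq_abs, one_mul, abs_of_nonneg hsb, abs_of_nonneg hsg] at this
    exact this
  have hc : |Real.cos (b2 / 2)| = |Real.cos (g2 / 2)| := by
    have := congrArg norm q1
    simpa only [norm_mul, Complex.norm_exp_ofReal_mul_I,
      Complex.norm_real, Real.norm_eq_abs, one_mul] using this
  have zero_of_sin : ∀ x ∈ Set.Ico 0 (2 * Real.pi), Real.sin (x / 2) = 0 → x = 0 := by
    intro x hx h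
    by_contra hne
    have : 0 < x := lt_of_le_of_ne hx.1 (Ne.symm hne)
    have := Real.sin_pos_of_pos_of_lt_pi (x := x / 2) (by linarith) (by linarith [hx.2])
    linarith
  have cosinj : ∀ x ∈ Set.Ico 0 (2 * Real.pi), ∀ y ∈ Set.Ico 0 (2 * Real.pi),
      Real.cos (x / 2) = Real.cos (y / 2) → x = y := by
    intro x hx y hy h
    have := Real.injOn_cos (x₁ := x / 2) (x₂ := y / 2)
      ⟨by linarith [hx.1], by linarith [hx.2]⟩ ⟨by linarith [hy.1], by linarith [hy.2]⟩ h
    linarith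
  have pi_of_cos : ∀ x ∈ Set.Ico 0 (2 * Real.pi), Real.cos (x / 2) = 0 → x = Real.pi := by
    intro x hx h
    apply cosinj x hx _ ⟨by linarith, by linarith⟩
    rw [h, Real.cos_pi_div_two]
  have n0 := Complex.exp_ne_zero (b0 * Complex.I)
  have n1 := Complex.exp_ne_zero (b1 * Complex.I)
  have n3 := Complex.exp_ne_zero (b3 * Complex.I)
  have m0 := Complex.exp_ne_zero (g0 * Complex.I)
  have m1 := Complex.exp_ne_zero (g1 * Complex.I)
  have hI := Complex.I_ne_zero
  have ib1 : b1 ∈ Set.Ico 0 (2 * Real.pi) := ⟨hb1.1, by linarith [hb1.2]⟩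
  have ig1 : g1 ∈ Set.Ico 0 (2 * Real.pi) := ⟨hg1.1, by linarith [hg1.2]⟩
  by_cases s0 : Real.sin (b2 / 2) = 0
  · have e1 := zero_of_sin b2 hb2 s0
    have e2 := zero_of_sin g2 hg2 (hs ▸ s0)
    have f1 := hb (Or.inl e1)
    have f2 := hg (Or.inl e2)
    subst e1 e2 f1 f2
    simp only [zero_div, Real.cos_zero, Complex.ofReal_one, mul_one, Complex.ofReal_zero,
      zero_mul, Complex.exp_zero] at q1 q4
    have h0 := aux_inj _ _ hb0 hg0 q1
    subst h0
    exact ⟨rfl, rfl, rfl, aux_inj _ _ hb3 hg3 (mul_left_cancel₀ n0 q4)⟩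
  by_cases c0 : Real.cos (b2 / 2) = 0
  · have e1 := pi_of_cos b2 hb2 c0
    have c0' : Real.cos (g2 / 2) = 0 := by
      rw [c0, abs_zero] at hc
      exact abs_eq_zero.mp hc.symm
    have e2 := pi_of_cos g2 hg2 c0'
    have f1 := hb (Or.inr e1)
    have f2 := hg (Or.inr e2)
    subst e1 e2 f1 f2
    simp only [Real.sin_pi_div_two, Complex.ofReal_one, mul_one, Complex.ofReal_zero,
      zero_mul, Complex.exp_zero] at q2 q3
    have h0 := aux_inj _ _ hb0 hg0 (mul_left_cancel₀ (neg_ne_zero.mpr hI) q2)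
    subst h0
    exact ⟨rfl, rfl, rfl, aux_inj _ _ hb3 hg3
      (mul_left_cancel₀ (mul_ne_zero (neg_ne_zero.mpr hI) n0) q3)⟩
  have s0' : ((Real.sin (g2 / 2) : ℝ) : ℂ) ≠ 0 := by
    rw [← hs]; exact_mod_cast s0
  have c0C : ((Real.cos (b2 / 2) : ℝ) : ℂ) ≠ 0 := by exact_mod_cast c0
  rw [hs] at q2 q3
  have q2' := mul_right_cancel₀ s0' q2
  have q3' := mul_right_cancel₀ s0' q3
  rcases abs_eq_abs.mp hc with h | h
  · have e2 := cosinj _ hb2 _ hg2 h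
    rw [← h] at q1
    have h0 := aux_inj _ _ hb0 hg0 (mul_right_cancel₀ c0C q1)
    subst h0
    have k := mul_ne_zero (neg_ne_zero.mpr hI) n0
    exact ⟨rfl, aux_inj _ _ ib1 ig1 (mul_left_cancel₀ k q2'), e2,
      aux_inj _ _ hb3 hg3 (mul_left_cancel₀ k q3')⟩
  · exfalso
    have hcg : Real.cos (g2 / 2) = - Real.cos (b2 / 2) := by linarith
    rw [hcg] at q1
    have r0 : Complex.exp (b0 * Complex.I) = - Complex.exp (g0 * Complex.I) := by
      apply mul_right_cancel₀ c0C
      rw [q1]; push_cast; ring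
    rw [r0] at q2'
    have r1 : Complex.exp (b1 * Complex.I) = - Complex.exp (g1 * Complex.I) := by
      apply mul_left_cancel₀ (mul_ne_zero hI m0)
      linear_combination q2'
    have im := congrArg Complex.im r1
    have re := congrArg Complex.re r1
    simp only [Complex.neg_im, Complex.neg_re, Complex.exp_ofReal_mul_I_im,
      Complex.exp_ofReal_mul_I_re] at im re
    have zz : ∀ x ∈ Set.Ico 0 Real.pi, Real.sin x ≤ 0 → x = 0 := by
      intro x hx h
      by_contra hne
      have : 0 < x := lt_of_le_of_ne hx.1 (Ne.symm hne)
      have := Real.sin_pos_of_pos_of_lt_pi this hx.2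
      linarith
    have t1 := Real.sin_nonneg_of_nonneg_of_le_pi hb1.1 hb1.2.le
    have t2 := Real.sin_nonneg_of_nonneg_of_le_pi hg1.1 hg1.2.le
    rw [zz b1 hb1 (by linarith), zz g1 hg1 (by linarith), Real.cos_zero] at re
    norm_num at re

theorem aux_exists (U : Matrix (Fin 2) (Fin 2) ℂ)
    (hU : U ∈ Matrix.unitaryGroup (Fin 2) ℂ) :
    ∃ b0 b1 b2 b3 : ℝ,
        b0 ∈ Set.Ico 0 (2 * Real.pi) ∧ b1 ∈ Set.Ico 0 Real.pi ∧
        b2 ∈ Set.Ico 0 (2 * Real.pi) ∧ b3 ∈ Set.Ico 0 (2 * Real.pi) ∧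
        ((b2 = 0 ∨ b2 = Real.pi) → b1 = 0) ∧
        U = Complex.exp (b0 * Complex.I) • (Pmat b3 * RXmat b2 * Pmat b1) := by
  simp only [aux_mat]
  have hp := Real.pi_pos
  have hI := Complex.I_ne_zero
  have hA := Matrix.mem_unitaryGroup_iff.mp hU
  have hB := Matrix.mem_unitaryGroup_iff'.mp hU
  have a00 := congrFun (congrFun hA 0) 0
  have a11 := congrFun (congrFun hA 1) 1
  have a10 := congrFun (congrFun hA 1) 0
  have c00 := congrFun (congrFun hB 0) 0
  simp only [Matrix.mul_apply, Fin.sum_univ_two, Matrix.star_apply, Matrix.one_apply,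
    if_true, one_ne_zero, if_false, RCLike.star_def] at a00 a11 a10 c00
  generalize U 0 0 = a at *
  generalize U 0 1 = b at *
  generalize U 1 0 = c at *
  generalize U 1 1 = d at *
  have nab : ‖a‖ ^ 2 + ‖b‖ ^ 2 = 1 := by
    rw [Complex.mul_conj', Complex.mul_conj'] at a00
    exact_mod_cast a00
  have ncd : ‖c‖ ^ 2 + ‖d‖ ^ 2 = 1 := by
    rw [Complex.mul_conj', Complex.mul_conj'] at a11
    exact_mod_cast a11
  have nac : ‖a‖ ^ 2 + ‖c‖ ^ 2 = 1 := by
    rw [Complex.conj_mul', Complex.conj_mul'] at c00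
    exact_mod_cast c00
  have nbc : ‖b‖ = ‖c‖ := by
    rw [← sq_eq_sq₀ (norm_nonneg _) (norm_nonneg _)]; linarith
  have nad : ‖a‖ = ‖d‖ := by
    rw [← sq_eq_sq₀ (norm_nonneg _) (norm_nonneg _)]; linarith
  have one_of : ∀ x : ℝ, 0 ≤ x → x ^ 2 = 1 → x = 1 := by
    intro x hx h
    nlinarith
  by_cases hb : b = 0
  · have hc : c = 0 := by
      rw [hb, norm_zero] at nbc
      exact norm_eq_zero.mp nbc.symm
    have na : ‖a‖ = 1 := one_of _ (norm_nonneg _) (by simpa [hb] using nab)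
    have ha : a ≠ 0 := by rintro rfl; simp at na
    obtain ⟨t0, ht0, h0⟩ := aux_ang a na
    obtain ⟨t3, ht3, h3⟩ := aux_ang (d / a) (by rw [norm_div, ← nad, na, div_one])
    refine ⟨t0, 0, 0, t3, ht0, ⟨le_rfl, hp⟩, ⟨le_rfl, by linarith⟩, ht3, fun _ => rfl, ?_⟩
    rw [h0, h3, hb, hc]
    simp
    field_simp
  by_cases ha : a = 0
  · have hd : d = 0 := by
      rw [ha, norm_zero] at nad
      exact norm_eq_zero.mp nad.symm
    have nb : ‖b‖ = 1 := one_of _ (norm_nonneg _) (by simpa [ha] using nab)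
    obtain ⟨t0, ht0, h0⟩ := aux_ang (Complex.I * b) (by simp [nb])
    obtain ⟨t3, ht3, h3⟩ := aux_ang (c / b) (by rw [norm_div, ← nbc, nb, div_one])
    refine ⟨t0, 0, Real.pi, t3, ht0, ⟨le_rfl, hp⟩, ⟨by linarith, by linarith⟩, ht3,
      fun _ => rfl, ?_⟩
    rw [h0, h3, ha, hd]
    refine ⟨by simp, ?_, ?_, by simp⟩
    · simp
      linear_combination b * Complex.I_mul_I
    · simp
      field_simp
      linear_combination c * Complex.I_sq
  have ra : 0 < ‖a‖ := norm_pos_iff.mpr ha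
  have rb : 0 < ‖b‖ := norm_pos_iff.mpr hb
  have raC : (‖a‖ : ℂ) ≠ 0 := by exact_mod_cast ra.ne'
  have rbC : (‖b‖ : ℂ) ≠ 0 := by exact_mod_cast rb.ne'
  obtain ⟨t1, ε, ht1, hε, h1⟩ : ∃ t1 ε : ℝ, t1 ∈ Set.Ico 0 Real.pi ∧ (ε = 1 ∨ ε = -1) ∧
      Complex.exp (t1 * Complex.I) * ε = Complex.I * (b / ‖b‖) * (‖a‖ / a) := by
    obtain ⟨t, ht, h⟩ := aux_ang (Complex.I * (b / ‖b‖) * (‖a‖ / a))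
      (by simp [ra.ne', rb.ne'])
    by_cases hlt : t < Real.pi
    · exact ⟨t, 1, ⟨ht.1, hlt⟩, Or.inl rfl, by simpa using h⟩
    · refine ⟨t - Real.pi, -1, ⟨by linarith, by linarith [ht.2]⟩, Or.inr rfl, ?_⟩
      rw [← h]
      push_cast
      rw [sub_mul, Complex.exp_sub, Complex.exp_pi_mul_I]
      ring
  have hε2 : ε ^ 2 = 1 := by rcases hε with h | h <;> rw [h] <;> norm_num
  have hεC : (ε : ℂ) ^ 2 = 1 := by exact_mod_cast hε2
  have hεabs : |ε| = 1 := by rcases hε with h | h <;> rw [h] <;> norm_num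
  have la : ‖a‖ < 1 := by nlinarith
  have bd : -1 < ε * ‖a‖ ∧ ε * ‖a‖ < 1 := by
    rcases hε with h | h <;> rw [h] <;> constructor <;> linarith
  obtain ⟨τ, hτ, hcos, hsin⟩ : ∃ τ : ℝ, (0 < τ ∧ τ < Real.pi) ∧ Real.cos τ = ε * ‖a‖ ∧
      Real.sin τ = ‖b‖ := by
    refine ⟨Real.arccos (ε * ‖a‖), ⟨Real.arccos_pos.mpr bd.2, ?_⟩,
      Real.cos_arccos bd.1.le bd.2.le, ?_⟩
    · refine lt_of_le_of_ne (Real.arccos_le_pi _) ?_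
      rw [Ne, Real.arccos_eq_pi]
      linarith
    · rw [Real.sin_arccos, Real.sqrt_eq_iff_mul_self_eq_of_pos rb]
      nlinarith
  obtain ⟨t0, ht0, h0⟩ := aux_ang (ε * (a / ‖a‖)) (by simp [ra.ne', hεabs])
  obtain ⟨t3, ht3, h3⟩ := aux_ang (c / b * Complex.exp (t1 * Complex.I))
    (by rw [norm_mul, norm_div, Complex.norm_exp_ofReal_mul_I, ← nbc, div_self rb.ne', one_mul])
  refine ⟨t0, t1, 2 * τ, t3, ht0, ht1, ⟨by linarith, by linarith⟩, ht3, ?_, ?_⟩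
  · rintro (h | h)
    · linarith
    · exfalso
      have : τ = Real.pi / 2 := by linarith
      rw [this, Real.cos_pi_div_two] at hcos
      have : ε ≠ 0 := by rintro rfl; norm_num at hε2
      exact mul_ne_zero this ra.ne' hcos.symm
  have h2 : 2 * τ / 2 = τ := by ring
  rw [h2, hcos, hsin]
  have e1 : Complex.exp (t1 * Complex.I) = ε * (Complex.I * (b / ‖b‖) * (‖a‖ / a)) := by
    rw [← h1]; linear_combination (-Complex.exp (t1 * Complex.I)) * hεC
  have k1 : a = Complex.exp (t0 * Complex.I) * ((ε * ‖a‖ : ℝ) : ℂ) := by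
    rw [h0]; push_cast; field_simp; linear_combination -hεC
  have k2 : b = -Complex.I * Complex.exp (t0 * Complex.I) * Complex.exp (t1 * Complex.I)
      * (‖b‖ : ℂ) := by
    rw [h0, e1]; field_simp; linear_combination (ε:ℂ)^2 * Complex.I_sq - hεC
  have k3 : c = -Complex.I * Complex.exp (t0 * Complex.I) * Complex.exp (t3 * Complex.I)
      * (‖b‖ : ℂ) := by
    rw [h3]
    have : c = c / b * b := by field_simp
    calc c = c / b * b := this
      _ = c / b * (-Complex.I * Complex.exp (t0 * Complex.I) * Complex.exp (t1 * Complex.I)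
        * (‖b‖ : ℂ)) := by rw [← k2]
      _ = _ := by ring
  refine ⟨k1, k2, k3, ?_⟩
  have hbb : b * (starRingEnd ℂ) b = (‖b‖ : ℂ) ^ 2 := Complex.mul_conj' b
  have haa : a * (starRingEnd ℂ) a = (‖a‖ : ℂ) ^ 2 := Complex.mul_conj' a
  have d1 : d * (‖b‖ : ℂ) ^ 2 * a = - (b * c * (‖a‖ : ℂ) ^ 2) := by
    rw [← hbb, ← haa]; linear_combination (a * b) * a10
  apply mul_right_cancel₀ (mul_ne_zero (pow_ne_zero 2 rbC) ha)
  rw [← mul_assoc, d1]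
  generalize Complex.exp (t0 * Complex.I) = E0 at *
  generalize Complex.exp (t1 * Complex.I) = E1 at *
  generalize Complex.exp (t3 * Complex.I) = E3 at *
  push_cast at k1 ⊢
  generalize (‖a‖ : ℂ) = A at *
  generalize (‖b‖ : ℂ) = B at *
  rw [k1, k2, k3]
  linear_combination (-(E0^2*E1*E3*B^2*A^2)) * Complex.I_sq - E0^2*E1*E3*B^2*A^2 * hεC

/-- Every 2×2 unitary admits a unique Euler decomposition
`U = exp(i·β₀) · P(β₃) · R_X(β₂) · P(β₁)` with `β₀, β₂, β₃ ∈ [0,2π)`, `β₁ ∈ [0,π)`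
and `β₁ = 0` whenever `β₂ ∈ {0, π}` (soundness and uniqueness of axiom (q)). -/
theorem euler_decomposition_2x2 (U : Matrix (Fin 2) (Fin 2) ℂ)
    (hU : U ∈ Matrix.unitaryGroup (Fin 2) ℂ) :
    ∃! β : ℝ × ℝ × ℝ × ℝ, match β with
      | (β₀, β₁, β₂, β₃) =>
        β₀ ∈ Set.Ico 0 (2 * Real.pi) ∧ β₁ ∈ Set.Ico 0 Real.pi ∧
        β₂ ∈ Set.Ico 0 (2 * Real.pi) ∧ β₃ ∈ Set.Ico 0 (2 * Real.pi) ∧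
        ((β₂ = 0 ∨ β₂ = Real.pi) → β₁ = 0) ∧
        U = Complex.exp (β₀ * Complex.I) • (Pmat β₃ * RXmat β₂ * Pmat β₁) := by
  obtain ⟨b0, b1, b2, b3, h0, h1, h2, h3, h, hM⟩ := aux_exists U hU
  refine ⟨(b0, b1, b2, b3), ⟨h0, h1, h2, h3, h, hM⟩, ?_⟩
  rintro ⟨g0, g1, g2, g3⟩ ⟨i0, i1, i2, i3, i, iM⟩
  obtain ⟨e0, e1, e2, e3⟩ := aux_unique U g0 g1 g2 g3 b0 b1 b2 b3 i0 i1 i2 i3 i iM h0 h1 h2 h3 h hM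
  rw [e0, e1, e2, e3]

end
end

section
/- For every 3×3 unitary complex matrix U there exists a unique 9-tuple of real numbers (δ₁, …, δ₉) with δ₁, δ₂, δ₅ ∈ [0, π), δ₃, δ₄, δ₆, δ₇, δ₈, δ₉ ∈ [0, 2π), and satisfying: δ₂ = 0 whenever δ₃ = 0; δ₁ = 0 whenever δ₃ = π; δ₁ = δ₂ = δ₃ = 0 whenever δ₄ = 0; δ₂ = 0 whenever δ₄ = π; δ₁ = 0 whenever δ₄ = π and δ₃ = 0; δ₅ = 0 whenever δ₆ ∈ {0, π}; such that U = D(δ₇,δ₈,δ₉) · C(δ₅,δ₆) · B(δ₄) · A(δ₁,δ₂,δ₃). (This is the soundness and uniqueness of the multi-controlled Euler axiom (r) of the paper, Proposition 15.) -/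
open Matrix Complex

noncomputable section

/-- The matrix `A(δ₁,δ₂,δ₃)`. -/
def Amat (δ₁ δ₂ δ₃ : ℝ) : Matrix (Fin 3) (Fin 3) ℂ :=
  !![Complex.exp (δ₂ * Complex.I), 0, 0;
     0, Complex.exp ((δ₁ + δ₂) * Complex.I) * (Real.cos (δ₃ / 2) : ℂ),
        -Complex.I * (Real.sin (δ₃ / 2) : ℂ);
     0, -Complex.I * Complex.exp ((δ₁ + δ₂) * Complex.I) * (Real.sin (δ₃ / 2) : ℂ),
        (Real.cos (δ₃ / 2) : ℂ)]

/-- The matrix `B(δ₄)`. -/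
def Bmat (δ₄ : ℝ) : Matrix (Fin 3) (Fin 3) ℂ :=
  !![(Real.cos (δ₄ / 2) : ℂ), -Complex.I * (Real.sin (δ₄ / 2) : ℂ), 0;
     -Complex.I * (Real.sin (δ₄ / 2) : ℂ), (Real.cos (δ₄ / 2) : ℂ), 0;
     0, 0, 1]

/-- The matrix `C(δ₅,δ₆)`. -/
def Cmat (δ₅ δ₆ : ℝ) : Matrix (Fin 3) (Fin 3) ℂ :=
  !![1, 0, 0;
     0, Complex.exp (δ₅ * Complex.I) * (Real.cos (δ₆ / 2) : ℂ),
        -Complex.I * (Real.sin (δ₆ / 2) : ℂ);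
     0, -Complex.I * Complex.exp (δ₅ * Complex.I) * (Real.sin (δ₆ / 2) : ℂ),
        (Real.cos (δ₆ / 2) : ℂ)]

/-- The matrix `D(δ₇,δ₈,δ₉) = diag(exp(iδ₉), exp(i(δ₇+δ₈+δ₉)), exp(iδ₈))`. -/
def Dmat (δ₇ δ₈ δ₉ : ℝ) : Matrix (Fin 3) (Fin 3) ℂ :=
  !![Complex.exp (δ₉ * Complex.I), 0, 0;
     0, Complex.exp ((δ₇ + δ₈ + δ₉) * Complex.I), 0;
     0, 0, Complex.exp (δ₈ * Complex.I)]

section helpers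

/-- Unit phase. -/
def ph (x : ℝ) : ℂ := Complex.exp (x * Complex.I)

lemma ph_add (x y : ℝ) : ph (x + y) = ph x * ph y := by
  unfold ph; rw [← Complex.exp_add]; push_cast; ring_nf

lemma ph_zero : ph 0 = 1 := by simp [ph]

lemma ph_ne (x : ℝ) : ph x ≠ 0 := Complex.exp_ne_zero _

lemma ph_norm (x : ℝ) : ‖ph x‖ = 1 := Complex.norm_exp_ofReal_mul_I x

lemma mul_conj_of_norm {z : ℂ} (h : ‖z‖ = 1) : z * (starRingEnd ℂ) z = 1 := by
  rw [Complex.mul_conj, Complex.normSq_eq_norm_sq, h]; simp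

lemma ph_conj (x : ℝ) : ph x * (starRingEnd ℂ) (ph x) = 1 := mul_conj_of_norm (ph_norm x)

lemma ph_inj {x y : ℝ} (hx : x ∈ Set.Ico 0 (2 * Real.pi)) (hy : y ∈ Set.Ico 0 (2 * Real.pi))
    (h : ph x = ph y) : x = y := by
  unfold ph at h
  rw [Complex.exp_eq_exp_iff_exists_int] at h
  obtain ⟨n, hn⟩ := h
  have h2 : x = y + n * (2 * Real.pi) := by
    have := congrArg Complex.im hn
    simpa using this
  have hp := Real.pi_pos
  have hn1 : (n : ℝ) < 1 := by
    by_contra hc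
    push Not at hc
    nlinarith [hx.1, hx.2, hy.1, hy.2]
  have hn2 : (-1 : ℝ) < n := by
    by_contra hc
    push Not at hc
    nlinarith [hx.1, hx.2, hy.1, hy.2]
  have : n = 0 := by
    have h1 : n < 1 := by exact_mod_cast hn1
    have h2 : -1 < n := by exact_mod_cast hn2
    omega
  subst this
  simpa using h2

lemma ph_ex {z : ℂ} (h : ‖z‖ = 1) : ∃ x ∈ Set.Ico 0 (2 * Real.pi), z = ph x := by
  refine ⟨toIcoMod Real.two_pi_pos 0 z.arg, by simpa using toIcoMod_mem_Ico Real.two_pi_pos 0 z.arg, ?_⟩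
  have h1 : z = ph z.arg := by
    have := Complex.norm_mul_exp_arg_mul_I z
    rw [h] at this
    simpa [ph] using this.symm
  have h2 := toIcoMod_add_toIcoDiv_zsmul Real.two_pi_pos 0 z.arg
  conv_lhs => rw [h1, ← h2, ph_add]
  have : ph (toIcoDiv Real.two_pi_pos 0 z.arg • (2 * Real.pi)) = 1 := by
    unfold ph
    rw [Complex.exp_eq_one_iff]
    exact ⟨toIcoDiv Real.two_pi_pos 0 z.arg, by simp; ring⟩
  rw [this, mul_one]

lemma ph_pi_add (x : ℝ) : ph (x + Real.pi) = - ph x := by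
  rw [ph_add]; simp [ph]

lemma polar_ex (z : ℂ) : ∃ r x : ℝ, x ∈ Set.Ico 0 Real.pi ∧ z = r * ph x ∧ r ^ 2 = ‖z‖ ^ 2 ∧
    (r = 0 → x = 0) := by
  by_cases hz : z = 0
  · exact ⟨0, 0, ⟨le_refl _, Real.pi_pos⟩, by simp [hz], by simp [hz], fun _ => rfl⟩
  have hn : ‖z‖ ≠ 0 := by simpa using hz
  have hnc : (‖z‖ : ℂ) ≠ 0 := by exact_mod_cast hn
  obtain ⟨x, hx, hxz⟩ := ph_ex (z := z / ‖z‖) (by simp [hn])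
  rw [div_eq_iff hnc] at hxz
  by_cases hxp : x < Real.pi
  · exact ⟨‖z‖, x, ⟨hx.1, hxp⟩, by rw [mul_comm]; exact hxz, rfl, fun h => absurd h hn⟩
  · push Not at hxp
    refine ⟨-‖z‖, x - Real.pi, ⟨by linarith, by linarith [hx.2]⟩, ?_, by ring, fun h => absurd (neg_eq_zero.mp h) hn⟩
    have := ph_pi_add (x - Real.pi)
    rw [sub_add_cancel] at this
    push_cast
    rw [hxz.trans (by rw [this])]
    simp [ph_norm]
    ring

lemma polar_inj {r r' x x' : ℝ} (hx : x ∈ Set.Ico 0 Real.pi) (hx' : x' ∈ Set.Ico 0 Real.pi)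
    (hr : r = 0 → x = 0) (hr' : r' = 0 → x' = 0)
    (h : (r : ℂ) * ph x = r' * ph x') : r = r' ∧ x = x' := by
  have hp := Real.pi_pos
  have hn : |r| = |r'| := by
    have := congrArg norm h
    simpa [ph_norm] using this
  by_cases h0 : r = 0
  · have h0' : r' = 0 := by simpa [h0] using hn.symm
    rw [hr h0, hr' h0', h0, h0']; simp
  have h0c : (r : ℂ) ≠ 0 := by exact_mod_cast h0
  rcases abs_eq_abs.mp hn with h1 | h1
  · subst h1
    exact ⟨rfl, ph_inj ⟨hx.1, by linarith [hx.2]⟩ ⟨hx'.1, by linarith [hx'.2]⟩ (mul_left_cancel₀ h0c h)⟩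
  · exfalso
    have h2 : r' = -r := by linarith
    rw [h2] at h
    have h3 : ph x = ph (x' + Real.pi) := by
      rw [ph_pi_add]
      apply mul_left_cancel₀ h0c
      rw [h]; push_cast; ring
    have := ph_inj ⟨hx.1, by linarith [hx.2]⟩ ⟨by linarith [hx'.1], by linarith [hx'.2]⟩ h3
    linarith [hx.2, hx'.1]

lemma half_ex {c s : ℝ} (h : c ^ 2 + s ^ 2 = 1) (hs : 0 ≤ s) (h0 : s = 0 → c = 1) :
    ∃ x ∈ Set.Ico 0 (2 * Real.pi), Real.cos (x / 2) = c ∧ Real.sin (x / 2) = s := by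
  have hc1 : -1 ≤ c := by nlinarith
  have hc2 : c ≤ 1 := by nlinarith
  have e : 2 * Real.arccos c / 2 = Real.arccos c := by ring
  have hc3 : c ≠ -1 := by
    rintro rfl
    have : s = 0 := by nlinarith
    linarith [h0 this]
  have hlt : Real.arccos c < Real.pi := by
    refine lt_of_le_of_ne (Real.arccos_le_pi c) fun h => hc3 ?_
    rw [Real.arccos_eq_pi] at h
    linarith
  refine ⟨2 * Real.arccos c, ⟨by linarith [Real.arccos_nonneg c], by linarith⟩, ?_, ?_⟩
  · rw [e, Real.cos_arccos hc1 hc2]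
  · rw [e, Real.sin_arccos, show 1 - c ^ 2 = s ^ 2 by linarith, Real.sqrt_sq hs]

lemma half_inj {x y : ℝ} (hx : x ∈ Set.Ico 0 (2 * Real.pi)) (hy : y ∈ Set.Ico 0 (2 * Real.pi))
    (h : Real.cos (x / 2) = Real.cos (y / 2)) : x = y := by
  have := Real.injOn_cos (x₁ := x / 2) (x₂ := y / 2) ⟨by linarith [hx.1], by linarith [hx.2]⟩
    ⟨by linarith [hy.1], by linarith [hy.2]⟩ h
  linarith

lemma half_sin_nonneg {x : ℝ} (hx : x ∈ Set.Ico 0 (2 * Real.pi)) : 0 ≤ Real.sin (x / 2) :=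
  Real.sin_nonneg_of_nonneg_of_le_pi (by linarith [hx.1]) (by linarith [hx.2])

lemma half_sin_zero {x : ℝ} (hx : x ∈ Set.Ico 0 (2 * Real.pi)) (h : Real.sin (x / 2) = 0) :
    x = 0 := by
  rcases eq_or_lt_of_le hx.1 with h1 | h1
  · exact h1.symm
  · have := Real.sin_pos_of_pos_of_lt_pi (x := x / 2) (by linarith) (by linarith [hx.2])
    linarith

lemma half_cos_zero {x : ℝ} (hx : x ∈ Set.Ico 0 (2 * Real.pi)) (h : Real.cos (x / 2) = 0) :
    x = Real.pi :=
  half_inj hx ⟨Real.pi_pos.le, by linarith [Real.pi_pos]⟩ (by rw [h, Real.cos_pi_div_two])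

lemma half_sq (x : ℝ) : Real.cos (x / 2) ^ 2 + Real.sin (x / 2) ^ 2 = 1 := by
  rw [add_comm]; exact Real.sin_sq_add_cos_sq _

lemma row_ex (a b c : ℂ) (h : ‖a‖ ^ 2 + ‖b‖ ^ 2 + ‖c‖ ^ 2 = 1) :
    ∃ δ₁ δ₂ δ₃ δ₄ δ₉ : ℝ, δ₁ ∈ Set.Ico 0 Real.pi ∧ δ₂ ∈ Set.Ico 0 Real.pi ∧
      δ₃ ∈ Set.Ico 0 (2 * Real.pi) ∧ δ₄ ∈ Set.Ico 0 (2 * Real.pi) ∧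
      δ₉ ∈ Set.Ico 0 (2 * Real.pi) ∧
        (δ₃ = 0 → δ₂ = 0) ∧
        (δ₃ = Real.pi → δ₁ = 0) ∧
        (δ₄ = 0 → δ₁ = 0 ∧ δ₂ = 0 ∧ δ₃ = 0) ∧
        (δ₄ = Real.pi → δ₂ = 0) ∧
        (δ₄ = Real.pi → δ₃ = 0 → δ₁ = 0) ∧
      a = ph δ₉ * (Real.cos (δ₄ / 2) * ph δ₂) ∧
      b = ph δ₉ * (-Complex.I * Real.sin (δ₄ / 2) * (ph (δ₁ + δ₂) * Real.cos (δ₃ / 2))) ∧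
      c = ph δ₉ * (-(Real.sin (δ₄ / 2) * Real.sin (δ₃ / 2))) := by
  have hp := Real.pi_pos
  have z1 : (0 : ℝ) ∈ Set.Ico 0 Real.pi := ⟨le_refl _, hp⟩
  have z2 : (0 : ℝ) ∈ Set.Ico 0 (2 * Real.pi) := ⟨le_refl _, by linarith⟩
  have II := Complex.I_mul_I
  by_cases hc : c = 0
  · by_cases hb : b = 0
    · obtain ⟨x, hx, hxa⟩ := ph_ex (z := a) (by
        have h1 : ‖a‖ ^ 2 = 1 := by simpa [hc, hb] using h
        nlinarith [norm_nonneg a])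
      exact ⟨0, 0, 0, 0, x, z1, z1, z2, z2, hx, by simp, by simp, by simp, by simp, by simp,
        by simp [ph_zero, hxa], by simp [hb], by simp [hc]⟩
    · have hbn : ‖b‖ ≠ 0 := by simpa using hb
      have hbc : (‖b‖ : ℂ) ≠ 0 := by exact_mod_cast hbn
      have hbp : 0 < ‖b‖ := by positivity
      obtain ⟨u, hu⟩ : ∃ u : ℂ, u = Complex.I * b / ‖b‖ := ⟨_, rfl⟩
      have hun : ‖u‖ = 1 := by rw [hu]; simp [hbn]
      have hub : b = -Complex.I * ‖b‖ * u := by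
        rw [hu]; field_simp; linear_combination II
      have huc := mul_conj_of_norm hun
      obtain ⟨r, x, hx, hr, hr2, hr0⟩ := polar_ex (u * (starRingEnd ℂ) a)
      have hphc := ph_conj x
      rw [norm_mul, hun, RCLike.norm_conj, one_mul] at hr2
      obtain ⟨y, hy, hyu⟩ := ph_ex (z := u * (starRingEnd ℂ) (ph x)) (by
        rw [norm_mul, hun, RCLike.norm_conj, ph_norm, one_mul])
      obtain ⟨w, hw, hw1, hw2⟩ := half_ex (c := r) (s := ‖b‖) (by
        rw [hr2]; simpa [hc] using h) hbp.le (fun h => absurd h hbn)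
      have hr' : (starRingEnd ℂ) u * a = r * (starRingEnd ℂ) (ph x) := by
        have := congrArg (starRingEnd ℂ) hr
        simpa using this
      refine ⟨x, 0, 0, w, y, hx, z1, z2, hw, hy, fun _ => rfl, fun h => absurd h.symm hp.ne', ?_,
        fun _ => rfl, ?_, ?_, ?_, ?_⟩
      · rintro rfl; simp at hw2; exact absurd hw2.symm hbn
      · rintro rfl _; simp at hw1; exact hr0 hw1.symm
      · rw [hw1, ← hyu, ph_zero]
        linear_combination u * hr' - a * huc
      · rw [hw2, ← hyu, add_zero]
        simp
        linear_combination hub + Complex.I * ‖b‖ * u * hphc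
      · simp [hc]
  · have hcn : ‖c‖ ≠ 0 := by simpa using hc
    have hcc : (‖c‖ : ℂ) ≠ 0 := by exact_mod_cast hcn
    have hcp : 0 < ‖c‖ := by positivity
    obtain ⟨y, hy, hyc⟩ := ph_ex (z := -c / ‖c‖) (by simp [hcn])
    have hyc' : c = - (ph y * ‖c‖) := by rw [← hyc]; field_simp
    have hphy := ph_conj y
    obtain ⟨r, x2, hx2, hr, hr2, hr0⟩ := polar_ex (a * (starRingEnd ℂ) (ph y))
    rw [norm_mul, RCLike.norm_conj, ph_norm, mul_one] at hr2
    obtain ⟨s, hs⟩ : ∃ s : ℝ, s = Real.sqrt (‖b‖ ^ 2 + ‖c‖ ^ 2) := ⟨_, rfl⟩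
    have hs2 : s ^ 2 = ‖b‖ ^ 2 + ‖c‖ ^ 2 := by rw [hs, Real.sq_sqrt (by positivity)]
    have hsp : 0 < s := by rw [hs]; positivity
    have hsc : (s : ℂ) ≠ 0 := by exact_mod_cast hsp.ne'
    obtain ⟨w4, hw4, hw41, hw42⟩ := half_ex (c := r) (s := s) (by
        rw [hr2, hs2]; linarith) hsp.le (fun h => absurd h hsp.ne')
    have hphx := ph_conj x2
    obtain ⟨t, x1, hx1, ht, ht2, ht0⟩ := polar_ex
      (Complex.I * b * (starRingEnd ℂ) (ph y) * (starRingEnd ℂ) (ph x2) / s)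
    have ht3 : t ^ 2 = ‖b‖ ^ 2 / s ^ 2 := by
      rw [ht2]; simp [ph_norm, div_pow]
    rw [div_eq_iff hsc] at ht
    obtain ⟨w3, hw3, hw31, hw32⟩ := half_ex (c := t) (s := ‖c‖ / s) (by
        rw [ht3, div_pow, ← add_div, ← hs2]; field_simp) (by positivity)
        (fun h => absurd h (by positivity))
    have hq : ‖c‖ / s ≠ 0 := by positivity
    refine ⟨x1, x2, w3, w4, y, hx1, hx2, hw3, hw4, hy, ?_, ?_, ?_, ?_, ?_, ?_, ?_, ?_⟩
    · rintro rfl; simp at hw32; exact absurd hw32.symm hq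
    · rintro rfl; simp at hw31; exact ht0 hw31.symm
    · rintro rfl; simp at hw42; exact absurd hw42 hsp.ne
    · rintro rfl; simp at hw41; exact hr0 hw41.symm
    · rintro _ rfl; simp at hw32; exact absurd hw32.symm hq
    · rw [hw41]; linear_combination ph y * hr - a * hphy
    · rw [hw42, hw31, ph_add]
      linear_combination -Complex.I * ph y * ph x2 * ht + b * II * (ph y * (starRingEnd ℂ) (ph y)) * (ph x2 * (starRingEnd ℂ) (ph x2)) - b * hphy - b * (ph y * (starRingEnd ℂ) (ph y)) * hphx
    · rw [hw42, hw32]; push_cast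
      rw [mul_div_cancel₀ _ hsc]
      linear_combination hyc'

lemma row_uniq {a b c : ℂ} {δ₁ δ₂ δ₃ δ₄ δ₉ ε₁ ε₂ ε₃ ε₄ ε₉ : ℝ}
    (d1 : δ₁ ∈ Set.Ico 0 Real.pi) (d2 : δ₂ ∈ Set.Ico 0 Real.pi)
    (d3 : δ₃ ∈ Set.Ico 0 (2 * Real.pi)) (d4 : δ₄ ∈ Set.Ico 0 (2 * Real.pi))
    (d9 : δ₉ ∈ Set.Ico 0 (2 * Real.pi))
    (dc1 : δ₃ = 0 → δ₂ = 0) (dc2 : δ₃ = Real.pi → δ₁ = 0)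
    (dc3 : δ₄ = 0 → δ₁ = 0 ∧ δ₂ = 0 ∧ δ₃ = 0) (dc4 : δ₄ = Real.pi → δ₂ = 0)
    (dc5 : δ₄ = Real.pi → δ₃ = 0 → δ₁ = 0)
    (da : a = ph δ₉ * (Real.cos (δ₄ / 2) * ph δ₂))
    (db : b = ph δ₉ * (-Complex.I * Real.sin (δ₄ / 2) * (ph (δ₁ + δ₂) * Real.cos (δ₃ / 2))))
    (dc : c = ph δ₉ * (-(Real.sin (δ₄ / 2) * Real.sin (δ₃ / 2))))
    (e1 : ε₁ ∈ Set.Ico 0 Real.pi) (e2 : ε₂ ∈ Set.Ico 0 Real.pi)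
    (e3 : ε₃ ∈ Set.Ico 0 (2 * Real.pi)) (e4 : ε₄ ∈ Set.Ico 0 (2 * Real.pi))
    (e9 : ε₉ ∈ Set.Ico 0 (2 * Real.pi))
    (ec1 : ε₃ = 0 → ε₂ = 0) (ec2 : ε₃ = Real.pi → ε₁ = 0)
    (ec3 : ε₄ = 0 → ε₁ = 0 ∧ ε₂ = 0 ∧ ε₃ = 0) (ec4 : ε₄ = Real.pi → ε₂ = 0)
    (ec5 : ε₄ = Real.pi → ε₃ = 0 → ε₁ = 0)
    (ea : a = ph ε₉ * (Real.cos (ε₄ / 2) * ph ε₂))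
    (eb : b = ph ε₉ * (-Complex.I * Real.sin (ε₄ / 2) * (ph (ε₁ + ε₂) * Real.cos (ε₃ / 2))))
    (ec : c = ph ε₉ * (-(Real.sin (ε₄ / 2) * Real.sin (ε₃ / 2)))) :
    δ₁ = ε₁ ∧ δ₂ = ε₂ ∧ δ₃ = ε₃ ∧ δ₄ = ε₄ ∧ δ₉ = ε₉ := by
  have ha := da.symm.trans ea
  have hb := db.symm.trans eb
  have hc := dc.symm.trans ec
  have ds4 := half_sin_nonneg d4
  have es4 := half_sin_nonneg e4
  have ds3 := half_sin_nonneg d3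
  have es3 := half_sin_nonneg e3
  have q4 := half_sq δ₄
  have q4' := half_sq ε₄
  have hs4 : Real.sin (δ₄ / 2) = Real.sin (ε₄ / 2) := by
    have := congrArg norm ha
    simp only [norm_mul, ph_norm, Complex.norm_real, Real.norm_eq_abs, one_mul, mul_one] at this
    have h2 := (sq_eq_sq_iff_abs_eq_abs _ _).mpr this
    have h3 : Real.sin (δ₄ / 2) ^ 2 = Real.sin (ε₄ / 2) ^ 2 := by linarith
    exact (pow_left_inj₀ ds4 es4 two_ne_zero).mp h3
  by_cases h0 : Real.sin (δ₄ / 2) = 0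
  · have d40 := half_sin_zero d4 h0
    have e40 := half_sin_zero e4 (hs4 ▸ h0)
    obtain ⟨rfl, rfl, rfl⟩ := dc3 d40
    obtain ⟨rfl, rfl, rfl⟩ := ec3 e40
    subst d40; subst e40
    refine ⟨rfl, rfl, rfl, rfl, ph_inj d9 e9 ?_⟩
    simpa [ph_zero] using ha
  have h0c : (Real.sin (ε₄ / 2) : ℂ) ≠ 0 := by rw [← hs4]; exact_mod_cast h0
  rw [hs4] at hb hc
  have hc1 : ph δ₉ * Real.sin (δ₃ / 2) = ph ε₉ * Real.sin (ε₃ / 2) := by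
    apply mul_left_cancel₀ h0c
    linear_combination -hc
  have hb1 : ph δ₉ * (ph (δ₁ + δ₂) * Real.cos (δ₃ / 2)) =
      ph ε₉ * (ph (ε₁ + ε₂) * Real.cos (ε₃ / 2)) := by
    apply mul_left_cancel₀ (mul_ne_zero Complex.I_ne_zero h0c)
    linear_combination -hb
  have hs3 : Real.sin (δ₃ / 2) = Real.sin (ε₃ / 2) := by
    have := congrArg norm hc1
    simp only [norm_mul, ph_norm, Complex.norm_real, Real.norm_eq_abs, one_mul] at this
    rwa [abs_of_nonneg ds3, abs_of_nonneg es3] at this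
  by_cases h3 : Real.sin (δ₃ / 2) = 0
  · have d30 := half_sin_zero d3 h3
    have e30 := half_sin_zero e3 (hs3 ▸ h3)
    have d20 := dc1 d30
    have e20 := ec1 e30
    subst d30 e30 d20 e20
    simp only [ph_zero, mul_one, add_zero, zero_div, Real.cos_zero, Complex.ofReal_one] at ha hb1
    obtain ⟨k1, k2⟩ := polar_inj (r := Real.cos (δ₄ / 2)) (r' := Real.cos (ε₄ / 2))
      (x := ε₁) (x' := δ₁) e1 d1 (fun h => by
        have : Real.cos (ε₄ / 2) = 0 := by
          rw [← sq_eq_zero_iff]; rw [h] at q4; rw [hs4] at q4; linarith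
        exact ec5 (half_cos_zero e4 this) rfl) (fun h => by
        have : Real.cos (δ₄ / 2) = 0 := by
          rw [← sq_eq_zero_iff]; rw [h] at q4'; rw [hs4] at q4; linarith
        exact dc5 (half_cos_zero d4 this) rfl) (by
        apply mul_left_cancel₀ (mul_ne_zero (ph_ne δ₉) (ph_ne ε₉))
        linear_combination ph ε₉ * ph ε₁ * ha - ph ε₉ * Real.cos (ε₄ / 2) * hb1)
    subst k2
    exact ⟨rfl, rfl, rfl, half_inj d4 e4 k1, ph_inj d9 e9 (mul_right_cancel₀ (ph_ne _) hb1)⟩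
  · have h3c : (Real.sin (ε₃ / 2) : ℂ) ≠ 0 := by rw [← hs3]; exact_mod_cast h3
    rw [hs3] at hc1
    have k9 := ph_inj d9 e9 (mul_right_cancel₀ h3c hc1)
    subst k9
    obtain ⟨k4, k2⟩ := polar_inj d2 e2 (fun h => dc4 (half_cos_zero d4 h))
      (fun h => ec4 (half_cos_zero e4 h)) (mul_left_cancel₀ (ph_ne _) ha)
    subst k2
    have hb2 := mul_left_cancel₀ (ph_ne _) hb1
    rw [ph_add, ph_add] at hb2
    obtain ⟨k3, k1⟩ := polar_inj (r := Real.cos (δ₃ / 2)) (r' := Real.cos (ε₃ / 2)) d1 e1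
      (fun h => dc2 (half_cos_zero d3 h))
      (fun h => ec2 (half_cos_zero e3 h)) (by
        apply mul_left_cancel₀ (ph_ne δ₂)
        linear_combination hb2)
    exact ⟨k1, rfl, half_inj d3 e3 k3, half_inj d4 e4 k4, rfl⟩

lemma block_ex (a b c d : ℂ) (h1 : ‖a‖ ^ 2 + ‖b‖ ^ 2 = 1) (h2 : ‖c‖ ^ 2 + ‖d‖ ^ 2 = 1)
    (h3 : a * (starRingEnd ℂ) c + b * (starRingEnd ℂ) d = 0) :
    ∃ x y : ℝ, ∃ f g : ℂ, x ∈ Set.Ico 0 Real.pi ∧ y ∈ Set.Ico 0 (2 * Real.pi) ∧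
      ((y = 0 ∨ y = Real.pi) → x = 0) ∧ ‖f‖ = 1 ∧ ‖g‖ = 1 ∧
      a = f * (ph x * Real.cos (y / 2)) ∧ b = f * (-Complex.I * Real.sin (y / 2)) ∧
      c = g * (-Complex.I * ph x * Real.sin (y / 2)) ∧ d = g * Real.cos (y / 2) := by
  have hp := Real.pi_pos
  have II := Complex.I_mul_I
  by_cases hb : b = 0
  · have ha : ‖a‖ = 1 := by
      have h1 : ‖a‖ ^ 2 = 1 := by simpa [hb] using h1
      nlinarith [norm_nonneg a]
    have ha0 : a ≠ 0 := by rintro rfl; simp at ha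
    have hc : c = 0 := by simpa [hb, ha0] using h3
    have hd : ‖d‖ = 1 := by
      have h1 : ‖d‖ ^ 2 = 1 := by simpa [hc] using h2
      nlinarith [norm_nonneg d]
    exact ⟨0, 0, a, d, ⟨le_refl _, hp⟩, ⟨le_refl _, by linarith⟩, fun _ => rfl, ha, hd,
      by simp [ph_zero], by simp [hb], by simp [hc], by simp⟩
  · have hbn : ‖b‖ ≠ 0 := by simpa using hb
    have hbc : (‖b‖ : ℂ) ≠ 0 := by exact_mod_cast hbn
    have hbp : 0 < ‖b‖ := by positivity
    obtain ⟨f, hf⟩ : ∃ u : ℂ, u = Complex.I * b / ‖b‖ := ⟨_, rfl⟩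
    have hfn : ‖f‖ = 1 := by rw [hf]; simp [hbn]
    have hfb : b = f * (-Complex.I * ‖b‖) := by
      rw [hf]; field_simp; linear_combination II
    have hfc := mul_conj_of_norm hfn
    have hf0 : f ≠ 0 := by rintro rfl; simp at hfn
    obtain ⟨r, x, hx, hr, hr2, hr0⟩ := polar_ex (a * (starRingEnd ℂ) f)
    have hphc := ph_conj x
    rw [norm_mul, RCLike.norm_conj, hfn, mul_one] at hr2
    have hrs : r ^ 2 + ‖b‖ ^ 2 = 1 := by rw [hr2]; exact h1
    have hrsc : (r : ℂ) ^ 2 + (‖b‖ : ℂ) ^ 2 = 1 := by exact_mod_cast hrs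
    obtain ⟨y, hy, hy1, hy2⟩ := half_ex hrs hbp.le (fun h => absurd h hbn)
    have ha : a = f * (ph x * r) := by linear_combination f * hr - a * hfc
    have h4 : ph x * r * (starRingEnd ℂ) c = Complex.I * ‖b‖ * (starRingEnd ℂ) d := by
      apply mul_left_cancel₀ hf0
      linear_combination h3 - (starRingEnd ℂ) c * ha - (starRingEnd ℂ) d * hfb
    have h5 : (starRingEnd ℂ) (ph x) * r * c = -Complex.I * ‖b‖ * d := by
      have := congrArg (starRingEnd ℂ) h4
      simpa using this
    obtain ⟨g, hg⟩ : ∃ g : ℂ, g = r * d + Complex.I * (starRingEnd ℂ) (ph x) * ‖b‖ * c := ⟨_, rfl⟩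
    have hd : d = g * r := by
      rw [hg]
      linear_combination -d * hrsc - Complex.I * ‖b‖ * h5 + d * ‖b‖ ^ 2 * II
    have hc : c = g * (-Complex.I * ph x * ‖b‖) := by
      rw [hg]
      linear_combination -c * hrsc + c * ‖b‖ ^ 2 * II * ph x * (starRingEnd ℂ) (ph x) + ph x * r * h5 - c * (r ^ 2 + ‖b‖ ^ 2) * hphc
    have hgn : ‖g‖ = 1 := by
      rw [hc, hd] at h2
      simp only [norm_mul, norm_neg, Complex.norm_I, ph_norm, Complex.norm_real, norm_norm,
        Real.norm_eq_abs, one_mul, mul_pow, sq_abs, abs_norm] at h2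
      have : ‖g‖ ^ 2 = 1 := by
        rw [← h2, ← mul_add, add_comm, hrs, mul_one]
      nlinarith [norm_nonneg g]
    refine ⟨x, y, f, g, hx, hy, ?_, hfn, hgn, ?_, ?_, ?_, ?_⟩
    · rintro (rfl | rfl)
      · simp at hy2; exact absurd hy2.symm hbn
      · simp at hy1; exact hr0 hy1.symm
    · rw [hy1, ← ha]
    · rw [hy2, ← hfb]
    · rw [hy2, ← hc]
    · rw [hy1, ← hd]

lemma block_uniq {f g f' g' : ℂ} {x y x' y' : ℝ} (hf : ‖f‖ = 1) (hg : ‖g‖ = 1)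
    (hf' : ‖f'‖ = 1) (hg' : ‖g'‖ = 1)
    (hx : x ∈ Set.Ico 0 Real.pi) (hy : y ∈ Set.Ico 0 (2 * Real.pi))
    (hxy : (y = 0 ∨ y = Real.pi) → x = 0)
    (hx' : x' ∈ Set.Ico 0 Real.pi) (hy' : y' ∈ Set.Ico 0 (2 * Real.pi))
    (hxy' : (y' = 0 ∨ y' = Real.pi) → x' = 0)
    (h1 : f * (ph x * Real.cos (y / 2)) = f' * (ph x' * Real.cos (y' / 2)))
    (h2 : f * (-Complex.I * Real.sin (y / 2)) = f' * (-Complex.I * Real.sin (y' / 2)))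
    (h3 : g * (-Complex.I * ph x * Real.sin (y / 2)) = g' * (-Complex.I * ph x' * Real.sin (y' / 2)))
    (h4 : g * Real.cos (y / 2) = g' * Real.cos (y' / 2)) :
    x = x' ∧ y = y' ∧ f = f' ∧ g = g' := by
  have hf0 : f' ≠ 0 := by rintro rfl; simp at hf'
  have ds := half_sin_nonneg hy
  have es := half_sin_nonneg hy'
  have hs : Real.sin (y / 2) = Real.sin (y' / 2) := by
    have := congrArg norm h2
    simp only [norm_mul, norm_neg, Complex.norm_I, hf, hf', Complex.norm_real, Real.norm_eq_abs, one_mul] at this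
    rwa [abs_of_nonneg ds, abs_of_nonneg es] at this
  by_cases h0 : Real.sin (y / 2) = 0
  · have k := half_sin_zero hy h0
    have k' := half_sin_zero hy' (hs ▸ h0)
    have l := hxy (Or.inl k)
    have l' := hxy' (Or.inl k')
    subst k k' l l'
    refine ⟨rfl, rfl, ?_, ?_⟩
    · simpa [ph_zero] using h1
    · simpa using h4
  have h0c : (Real.sin (y' / 2) : ℂ) ≠ 0 := by rw [← hs]; exact_mod_cast h0
  rw [hs] at h2 h3
  have kf := mul_right_cancel₀ (mul_ne_zero (neg_ne_zero.mpr Complex.I_ne_zero) h0c) h2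
  subst kf
  obtain ⟨k1, k2⟩ := polar_inj (r := Real.cos (y / 2)) (r' := Real.cos (y' / 2)) hx hx'
      (fun h => hxy (Or.inr (half_cos_zero hy h)))
      (fun h => hxy' (Or.inr (half_cos_zero hy' h))) (by
        linear_combination mul_left_cancel₀ hf0 h1)
  subst k2
  refine ⟨rfl, half_inj hy hy' k1, rfl, ?_⟩
  exact mul_right_cancel₀ (mul_ne_zero (mul_ne_zero (neg_ne_zero.mpr Complex.I_ne_zero) (ph_ne x)) h0c) h3

lemma Amat_eq (x y z : ℝ) : Amat x y z = !![ph y, 0, 0;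
     0, ph (x + y) * (Real.cos (z / 2) : ℂ), -Complex.I * (Real.sin (z / 2) : ℂ);
     0, -Complex.I * ph (x + y) * (Real.sin (z / 2) : ℂ), (Real.cos (z / 2) : ℂ)] := by
  simp only [Amat, ph, Complex.ofReal_add]

lemma Cmat_eq (x z : ℝ) : Cmat x z = !![1, 0, 0;
     0, ph x * (Real.cos (z / 2) : ℂ), -Complex.I * (Real.sin (z / 2) : ℂ);
     0, -Complex.I * ph x * (Real.sin (z / 2) : ℂ), (Real.cos (z / 2) : ℂ)] := by
  simp only [Cmat, ph]

lemma Dmat_eq (x y z : ℝ) : Dmat x y z = !![ph z, 0, 0; 0, ph (x + y + z), 0; 0, 0, ph y] := by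
  simp only [Dmat, ph, Complex.ofReal_add]

lemma DC_eq (x y z u v : ℝ) : Dmat x y z * Cmat u v = !![ph z, 0, 0;
     0, ph (x + y + z) * (ph u * Real.cos (v / 2)), ph (x + y + z) * (-Complex.I * Real.sin (v / 2));
     0, ph y * (-Complex.I * ph u * Real.sin (v / 2)), ph y * Real.cos (v / 2)] := by
  rw [Dmat_eq, Cmat_eq]
  ext i j
  fin_cases i <;> fin_cases j <;> simp [Matrix.mul_apply, Fin.sum_univ_three]

lemma half_sq_c (x : ℝ) : (Real.cos (x / 2) : ℂ) ^ 2 + (Real.sin (x / 2) : ℂ) ^ 2 = 1 := by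
  exact_mod_cast half_sq x

lemma A_unitary (x y z : ℝ) : Amat x y z ∈ Matrix.unitaryGroup (Fin 3) ℂ := by
  rw [Amat_eq, Matrix.mem_unitaryGroup_iff]
  have h1 := ph_conj y
  have h2 := ph_conj (x + y)
  have h3 := half_sq_c z
  have II := Complex.I_mul_I
  generalize ph y = p at *
  generalize ph (x + y) = q at *
  generalize Real.cos (z / 2) = c at *
  generalize Real.sin (z / 2) = s at *
  ext i j
  fin_cases i <;> fin_cases j <;> simp [Matrix.mul_apply, Fin.sum_univ_three]
  · exact h1
  · linear_combination c ^ 2 * h2 + h3 - s ^ 2 * II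
  · linear_combination Complex.I * c * s * h2
  · linear_combination -Complex.I * c * s * h2
  · linear_combination s ^ 2 * h2 + h3 - s ^ 2 * II * q * (starRingEnd ℂ) q

lemma B_unitary (z : ℝ) : Bmat z ∈ Matrix.unitaryGroup (Fin 3) ℂ := by
  rw [Bmat, Matrix.mem_unitaryGroup_iff]
  have h3 := half_sq_c z
  have II := Complex.I_mul_I
  generalize Real.cos (z / 2) = c at *
  generalize Real.sin (z / 2) = s at *
  ext i j
  fin_cases i <;> fin_cases j <;> simp [Matrix.mul_apply, Fin.sum_univ_three]
  · linear_combination h3 - s ^ 2 * II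
  · ring
  · ring
  · linear_combination h3 - s ^ 2 * II

lemma BA_row (x y z w : ℝ) : (Bmat w * Amat x y z) 0 0 = Real.cos (w / 2) * ph y ∧
    (Bmat w * Amat x y z) 0 1 = -Complex.I * Real.sin (w / 2) * (ph (x + y) * Real.cos (z / 2)) ∧
    (Bmat w * Amat x y z) 0 2 = -(Real.sin (w / 2) * Real.sin (z / 2)) := by
  rw [Bmat, Amat_eq]
  refine ⟨?_, ?_, ?_⟩ <;> simp [Matrix.mul_apply, Fin.sum_univ_three]
  linear_combination (Complex.sin (w / 2) * Complex.sin (z / 2)) * Complex.I_mul_I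

lemma full_row {U : Matrix (Fin 3) (Fin 3) ℂ} {δ₁ δ₂ δ₃ δ₄ δ₅ δ₆ δ₇ δ₈ δ₉ : ℝ}
    (h : U = Dmat δ₇ δ₈ δ₉ * Cmat δ₅ δ₆ * Bmat δ₄ * Amat δ₁ δ₂ δ₃) :
      U 0 0 = ph δ₉ * (Real.cos (δ₄ / 2) * ph δ₂) ∧
      U 0 1 = ph δ₉ * (-Complex.I * Real.sin (δ₄ / 2) * (ph (δ₁ + δ₂) * Real.cos (δ₃ / 2))) ∧
      U 0 2 = ph δ₉ * (-(Real.sin (δ₄ / 2) * Real.sin (δ₃ / 2))) := by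
  obtain ⟨h0, h1, h2⟩ := BA_row δ₁ δ₂ δ₃ δ₄
  rw [← h0, ← h1, ← h2, h, mul_assoc, DC_eq]
  generalize Bmat δ₄ * Amat δ₁ δ₂ δ₃ = M
  refine ⟨?_, ?_, ?_⟩ <;> rw [Matrix.mul_apply, Fin.sum_univ_three] <;> simp

end helpers

/-- Every 3×3 unitary admits a unique decomposition
`U = D(δ₇,δ₈,δ₉) · C(δ₅,δ₆) · B(δ₄) · A(δ₁,δ₂,δ₃)` with the angle conditions of
Figure 3 of the paper (soundness and uniqueness of axiom (r), Proposition 15). -/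
theorem euler_decomposition_3x3 (U : Matrix (Fin 3) (Fin 3) ℂ)
    (hU : U ∈ Matrix.unitaryGroup (Fin 3) ℂ) :
    ∃! δ : ℝ × ℝ × ℝ × ℝ × ℝ × ℝ × ℝ × ℝ × ℝ, match δ with
      | (δ₁, δ₂, δ₃, δ₄, δ₅, δ₆, δ₇, δ₈, δ₉) =>
        δ₁ ∈ Set.Ico 0 Real.pi ∧ δ₂ ∈ Set.Ico 0 Real.pi ∧ δ₅ ∈ Set.Ico 0 Real.pi ∧
        δ₃ ∈ Set.Ico 0 (2 * Real.pi) ∧ δ₄ ∈ Set.Ico 0 (2 * Real.pi) ∧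
        δ₆ ∈ Set.Ico 0 (2 * Real.pi) ∧ δ₇ ∈ Set.Ico 0 (2 * Real.pi) ∧
        δ₈ ∈ Set.Ico 0 (2 * Real.pi) ∧ δ₉ ∈ Set.Ico 0 (2 * Real.pi) ∧
        (δ₃ = 0 → δ₂ = 0) ∧
        (δ₃ = Real.pi → δ₁ = 0) ∧
        (δ₄ = 0 → δ₁ = 0 ∧ δ₂ = 0 ∧ δ₃ = 0) ∧
        (δ₄ = Real.pi → δ₂ = 0) ∧
        (δ₄ = Real.pi → δ₃ = 0 → δ₁ = 0) ∧
        ((δ₆ = 0 ∨ δ₆ = Real.pi) → δ₅ = 0) ∧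
        U = Dmat δ₇ δ₈ δ₉ * Cmat δ₅ δ₆ * Bmat δ₄ * Amat δ₁ δ₂ δ₃ := by
  apply existsUnique_of_exists_of_unique
  · have hrow : ‖U 0 0‖ ^ 2 + ‖U 0 1‖ ^ 2 + ‖U 0 2‖ ^ 2 = 1 := by
      have h := congrFun (congrFun (Matrix.mem_unitaryGroup_iff.mp hU) 0) 0
      simp only [Matrix.mul_apply, Fin.sum_univ_three, Matrix.star_apply, RCLike.star_def,
        Complex.mul_conj, Complex.normSq_eq_norm_sq, Matrix.one_apply_eq] at h
      exact_mod_cast h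
    obtain ⟨δ₁, δ₂, δ₃, δ₄, δ₉, d1, d2, d3, d4, d9, c1, c2, c3, c4, c5, ha, hb, hc⟩ :=
      row_ex _ _ _ hrow
    obtain ⟨r0, r1, r2⟩ := BA_row δ₁ δ₂ δ₃ δ₄
    rw [← r0] at ha
    rw [← r1] at hb
    rw [← r2] at hc
    have hM : Bmat δ₄ * Amat δ₁ δ₂ δ₃ ∈ Matrix.unitaryGroup (Fin 3) ℂ :=
      mul_mem (B_unitary _) (A_unitary _ _ _)
    have hV : U * star (Bmat δ₄ * Amat δ₁ δ₂ δ₃) ∈ Matrix.unitaryGroup (Fin 3) ℂ :=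
      mul_mem hU (Unitary.star_mem hM)
    obtain ⟨V, hVe⟩ : ∃ V, V = U * star (Bmat δ₄ * Amat δ₁ δ₂ δ₃) := ⟨_, rfl⟩
    have hUV : U = V * (Bmat δ₄ * Amat δ₁ δ₂ δ₃) := by
      rw [hVe, mul_assoc, Matrix.mem_unitaryGroup_iff'.mp hM, mul_one]
    have hV0 : ∀ j, V 0 j = ph δ₉ * (1 : Matrix (Fin 3) (Fin 3) ℂ) 0 j := by
      intro j
      rw [← Matrix.mem_unitaryGroup_iff.mp hM, hVe, Matrix.mul_apply, Matrix.mul_apply (i := 0),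
        Fin.sum_univ_three, Fin.sum_univ_three, ha, hb, hc]
      ring
    rw [← hVe] at hV
    have V00 : V 0 0 = ph δ₉ := by simpa using hV0 0
    have V01 : V 0 1 = 0 := by simpa using hV0 1
    have V02 : V 0 2 = 0 := by simpa using hV0 2
    have hVV : ∀ i j, V i 0 * (starRingEnd ℂ) (V j 0) + V i 1 * (starRingEnd ℂ) (V j 1) +
        V i 2 * (starRingEnd ℂ) (V j 2) = (1 : Matrix (Fin 3) (Fin 3) ℂ) i j := by
      intro i j
      rw [← Matrix.mem_unitaryGroup_iff.mp hV, Matrix.mul_apply, Fin.sum_univ_three]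
      rfl
    have V10 : V 1 0 = 0 := by
      have := hVV 1 0
      simpa [V00, V01, V02, ph_ne] using this
    have V20 : V 2 0 = 0 := by
      have := hVV 2 0
      simpa [V00, V01, V02, ph_ne] using this
    have n1 : ‖V 1 1‖ ^ 2 + ‖V 1 2‖ ^ 2 = 1 := by
      have := hVV 1 1
      rw [V10, Matrix.one_apply_eq] at this
      simp only [Complex.mul_conj, Complex.normSq_eq_norm_sq] at this
      simpa using (by exact_mod_cast this : ‖(0 : ℂ)‖ ^ 2 + ‖V 1 1‖ ^ 2 + ‖V 1 2‖ ^ 2 = 1)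
    have n2 : ‖V 2 1‖ ^ 2 + ‖V 2 2‖ ^ 2 = 1 := by
      have := hVV 2 2
      rw [V20, Matrix.one_apply_eq] at this
      simp only [Complex.mul_conj, Complex.normSq_eq_norm_sq] at this
      simpa using (by exact_mod_cast this : ‖(0 : ℂ)‖ ^ 2 + ‖V 2 1‖ ^ 2 + ‖V 2 2‖ ^ 2 = 1)
    have n3 : V 1 1 * (starRingEnd ℂ) (V 2 1) + V 1 2 * (starRingEnd ℂ) (V 2 2) = 0 := by
      have := hVV 1 2
      simpa [V10] using this
    obtain ⟨δ₅, δ₆, f, g, d5, d6, c6, hf, hg, w1, w2, w3, w4⟩ := block_ex _ _ _ _ n1 n2 n3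
    obtain ⟨δ₈, d8, rfl⟩ := ph_ex hg
    obtain ⟨δ₇, d7, h7⟩ := ph_ex (z := f * (starRingEnd ℂ) (ph δ₈) * (starRingEnd ℂ) (ph δ₉)) (by
      simp [hf, ph_norm])
    have hf' : f = ph (δ₇ + δ₈ + δ₉) := by
      rw [ph_add, ph_add, ← h7]
      linear_combination -f * ph_conj δ₈ - f * ph δ₈ * (starRingEnd ℂ) (ph δ₈) * ph_conj δ₉
    refine ⟨(δ₁, δ₂, δ₃, δ₄, δ₅, δ₆, δ₇, δ₈, δ₉), d1, d2, d5, d3, d4, d6, d7, d8, d9, c1, c2, c3,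
      c4, c5, c6, ?_⟩
    rw [mul_assoc, DC_eq, ← hf', ← w1, ← w2, ← w3, ← w4]
    conv_lhs => rw [hUV]
    congr 1
    ext i j
    fin_cases i <;> fin_cases j <;> simp [V00, V01, V02, V10, V20]
  · rintro ⟨δ₁, δ₂, δ₃, δ₄, δ₅, δ₆, δ₇, δ₈, δ₉⟩ ⟨ε₁, ε₂, ε₃, ε₄, ε₅, ε₆, ε₇, ε₈, ε₉⟩
      ⟨d1, d2, d5, d3, d4, d6, d7, d8, d9, dc1, dc2, dc3, dc4, dc5, dc6, hd⟩
      ⟨e1, e2, e5, e3, e4, e6, e7, e8, e9, ec1, ec2, ec3, ec4, ec5, ec6, he⟩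
    obtain ⟨da, db, dc⟩ := full_row hd
    obtain ⟨ea, eb, ec⟩ := full_row he
    obtain ⟨rfl, rfl, rfl, rfl, rfl⟩ := row_uniq d1 d2 d3 d4 d9 dc1 dc2 dc3 dc4 dc5 da db dc
      e1 e2 e3 e4 e9 ec1 ec2 ec3 ec4 ec5 ea eb ec
    have hM : Bmat δ₄ * Amat δ₁ δ₂ δ₃ ∈ Matrix.unitaryGroup (Fin 3) ℂ :=
      mul_mem (B_unitary _) (A_unitary _ _ _)
    have hDC : Dmat δ₇ δ₈ δ₉ * Cmat δ₅ δ₆ = Dmat ε₇ ε₈ δ₉ * Cmat ε₅ ε₆ := by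
      have h := hd.symm.trans he
      rw [mul_assoc, mul_assoc (Dmat ε₇ ε₈ δ₉ * Cmat ε₅ ε₆)] at h
      have hMM := Matrix.mem_unitaryGroup_iff.mp hM
      generalize Bmat δ₄ * Amat δ₁ δ₂ δ₃ = M at h hMM
      have h2 := congrArg (· * star M) h
      rw [mul_assoc _ M, mul_assoc _ M, hMM, mul_one, mul_one] at h2
      exact h2
    rw [DC_eq, DC_eq] at hDC
    have g1 := congrFun (congrFun hDC 1) 1
    have g2 := congrFun (congrFun hDC 1) 2
    have g3 := congrFun (congrFun hDC 2) 1
    have g4 := congrFun (congrFun hDC 2) 2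
    obtain ⟨rfl, rfl, hf, hg⟩ := block_uniq (ph_norm _) (ph_norm _) (ph_norm _) (ph_norm _)
      d5 d6 dc6 e5 e6 ec6 g1 g2 g3 g4
    have k8 := ph_inj d8 e8 hg
    subst k8
    rw [ph_add, ph_add, ph_add (ε₇ + δ₈), ph_add] at hf
    have k7 := ph_inj d7 e7 (mul_right_cancel₀ (ph_ne _) (mul_right_cancel₀ (ph_ne _) hf))
    subst k7
    rfl

end
end

section
/- For all real numbers α₁, α₂, α₃ there exists a unique quadruple of real numbers (β₁, β₂, β₃, β₄) with β₁, β₂ ∈ [0, π), β₃, β₄ ∈ [0, 2π), and β₁ = 0 whenever β₂ ∈ {0, π/2}, such that BS(α₃) · Q(α₂) · BS(α₁) = R(β₄) · Q(β₃) · BS(β₂) · Q(β₁). (This is the existence and uniqueness of the parameters in the two-mode linear-optical Euler axiom (F) of the paper.) -/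
open Matrix Complex

noncomputable section

/-- The beam splitter `BS(θ)`. -/
def BSmat (θ : ℝ) : Matrix (Fin 2) (Fin 2) ℂ :=
  !![(Real.cos θ : ℂ), Complex.I * (Real.sin θ : ℂ);
     Complex.I * (Real.sin θ : ℂ), (Real.cos θ : ℂ)]

/-- The phase shifter on the first mode `Q(φ) = diag(exp(iφ), 1)`. -/
def Qmat (φ : ℝ) : Matrix (Fin 2) (Fin 2) ℂ :=
  !![Complex.exp (φ * Complex.I), 0; 0, 1]

/-- The phase shifter on the second mode `R(φ) = diag(1, exp(iφ))`. -/
def Rmat (φ : ℝ) : Matrix (Fin 2) (Fin 2) ℂ :=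
  !![1, 0; 0, Complex.exp (φ * Complex.I)]

/-- Explicit form of the right-hand side. -/
lemma rhs_form (a b c d : ℝ) : Rmat d * Qmat c * BSmat b * Qmat a =
    !![exp (c * I) * Real.cos b * exp (a * I), exp (c * I) * (I * Real.sin b);
       exp (d * I) * (I * Real.sin b) * exp (a * I), exp (d * I) * Real.cos b] := by
  ext i j
  fin_cases i <;> fin_cases j <;>
    simp [Rmat, Qmat, BSmat, Matrix.mul_apply, Fin.sum_univ_two]

lemma conj_exp_mul (x : ℝ) : (starRingEnd ℂ) (exp (x * I)) * exp (x * I) = 1 := by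
  rw [← Complex.exp_conj, ← Complex.exp_add]
  simp

lemma BSmat_unitary (x : ℝ) : BSmat x ∈ Matrix.unitaryGroup (Fin 2) ℂ := by
  rw [Matrix.mem_unitaryGroup_iff']
  have h : (Real.cos x : ℂ) * Real.cos x + Real.sin x * Real.sin x = 1 := by
    norm_cast
    nlinarith [Real.sin_sq_add_cos_sq x]
  have hI : I * I = -1 := Complex.I_mul_I
  ext i j
  fin_cases i <;> fin_cases j <;>
    simp [BSmat, Matrix.mul_apply, Fin.sum_univ_two, Matrix.star_apply,
      -Complex.ofReal_cos, -Complex.ofReal_sin] <;>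
    first
      | (ring; done)
      | (linear_combination h - (Real.sin x : ℂ) * Real.sin x * hI)

lemma Qmat_unitary (x : ℝ) : Qmat x ∈ Matrix.unitaryGroup (Fin 2) ℂ := by
  rw [Matrix.mem_unitaryGroup_iff']
  have h := conj_exp_mul x
  ext i j
  fin_cases i <;> fin_cases j <;>
    simp [Qmat, Matrix.mul_apply, Fin.sum_univ_two, Matrix.star_apply, h]

lemma exp_inj {a b : ℝ} (ha : a ∈ Set.Ico 0 (2 * Real.pi)) (hb : b ∈ Set.Ico 0 (2 * Real.pi))
    (h : exp (a * I) = exp (b * I)) : a = b := by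
  rw [Complex.exp_eq_exp_iff_exists_int] at h
  obtain ⟨n, hn⟩ := h
  have h1 : (a : ℂ) = b + n * (2 * Real.pi) := by
    have : ((a : ℂ) - (b + n * (2 * Real.pi))) * I = 0 := by linear_combination hn
    rcases mul_eq_zero.mp this with h | h
    · linear_combination h
    · exact absurd h I_ne_zero
  have h2 : a = b + n * (2 * Real.pi) := by exact_mod_cast h1
  obtain ⟨ha0, ha1⟩ := ha
  obtain ⟨hb0, hb1⟩ := hb
  have hpi := Real.pi_pos
  have l1 : (n : ℝ) < 1 := by
    by_contra hc
    push Not at hc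
    nlinarith
  have l2 : (-1 : ℝ) < n := by
    by_contra hc
    push Not at hc
    nlinarith
  have l1' : n < 1 := by exact_mod_cast l1
  have l2' : -1 < n := by exact_mod_cast l2
  have : n = 0 := by omega
  subst this
  simpa using h2

lemma exp_surj {z : ℂ} (hz : ‖z‖ = 1) : ∃ a ∈ Set.Ico 0 (2 * Real.pi), exp (a * I) = z := by
  have hpi := Real.pi_pos
  have h : exp (arg z * I) = z := by
    have := Complex.norm_mul_exp_arg_mul_I z
    rwa [hz, ofReal_one, one_mul] at this
  have h1 := Complex.neg_pi_lt_arg z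
  have h2 := Complex.arg_le_pi z
  by_cases h0 : 0 ≤ arg z
  · exact ⟨arg z, ⟨h0, by linarith⟩, h⟩
  · push Not at h0
    refine ⟨arg z + 2 * Real.pi, ⟨by linarith, by linarith⟩, ?_⟩
    push_cast
    rw [add_mul, Complex.exp_add, Complex.exp_two_pi_mul_I, mul_one, h]

lemma exp_surj_half {z : ℂ} (hz : ‖z‖ = 1) : ∃ a ∈ Set.Ico 0 Real.pi, ∃ e : ℝ, e * e = 1 ∧
    z = e * exp (a * I) := by
  obtain ⟨a, ⟨h0, h1⟩, h⟩ := exp_surj hz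
  by_cases hp : a < Real.pi
  · exact ⟨a, ⟨h0, hp⟩, 1, by norm_num, by simp [h]⟩
  · push Not at hp
    refine ⟨a - Real.pi, ⟨by linarith, by linarith⟩, -1, by norm_num, ?_⟩
    push_cast
    rw [sub_mul, Complex.exp_sub, Complex.exp_pi_mul_I, h]
    simp [div_neg]

lemma euler_unique {a b c d a' b' c' d' : ℝ}
    (ha : a ∈ Set.Ico 0 Real.pi) (hb : b ∈ Set.Ico 0 Real.pi)
    (hc : c ∈ Set.Ico 0 (2 * Real.pi)) (hd : d ∈ Set.Ico 0 (2 * Real.pi))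
    (hz : (b = 0 ∨ b = Real.pi / 2) → a = 0)
    (ha' : a' ∈ Set.Ico 0 Real.pi) (hb' : b' ∈ Set.Ico 0 Real.pi)
    (hc' : c' ∈ Set.Ico 0 (2 * Real.pi)) (hd' : d' ∈ Set.Ico 0 (2 * Real.pi))
    (hz' : (b' = 0 ∨ b' = Real.pi / 2) → a' = 0)
    (h : Rmat d * Qmat c * BSmat b * Qmat a = Rmat d' * Qmat c' * BSmat b' * Qmat a') :
    a = a' ∧ b = b' ∧ c = c' ∧ d = d' := by
  have hpi := Real.pi_pos
  rw [rhs_form, rhs_form] at h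
  have h00 := congrFun (congrFun h 0) 0
  have h01 := congrFun (congrFun h 0) 1
  have h10 := congrFun (congrFun h 1) 0
  have h11 := congrFun (congrFun h 1) 1
  simp only [Matrix.of_apply, Matrix.cons_val', Matrix.cons_val_zero, Matrix.cons_val_one,
    Matrix.cons_val_fin_one] at h00 h01 h10 h11
  have widen : ∀ x ∈ Set.Ico 0 Real.pi, x ∈ Set.Ico 0 (2 * Real.pi) :=
    fun x hx => ⟨hx.1, by linarith [hx.2]⟩
  have cosinj : ∀ x ∈ Set.Ico 0 Real.pi, ∀ y ∈ Set.Ico 0 Real.pi,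
      Real.cos x = Real.cos y → x = y := fun x hx y hy hxy =>
    Real.injOn_cos ⟨hx.1, hx.2.le⟩ ⟨hy.1, hy.2.le⟩ hxy
  have sin0 : ∀ x ∈ Set.Ico 0 Real.pi, Real.sin x = 0 → x = 0 := by
    intro x hx hs
    by_contra hne
    exact (Real.sin_pos_of_pos_of_lt_pi (lt_of_le_of_ne hx.1 (Ne.symm hne)) hx.2).ne' hs
  have cos0 : ∀ x ∈ Set.Ico 0 Real.pi, Real.cos x = 0 → x = Real.pi / 2 := by
    intro x hx hs
    exact cosinj x hx _ ⟨by linarith, by linarith⟩ (by rw [hs, Real.cos_pi_div_two])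
  have snn : ∀ x ∈ Set.Ico 0 Real.pi, 0 ≤ Real.sin x := fun x hx =>
    Real.sin_nonneg_of_nonneg_of_le_pi hx.1 hx.2.le
  have hs : Real.sin b = Real.sin b' := by
    have := congrArg norm h01
    simp only [norm_mul, Complex.norm_exp_ofReal_mul_I, Complex.norm_I, one_mul,
      Complex.norm_real, Real.norm_eq_abs, abs_of_nonneg (snn b hb),
      abs_of_nonneg (snn b' hb')] at this
    exact this
  have hcc : Real.cos b ^ 2 = Real.cos b' ^ 2 := by
    have e1 := Real.sin_sq_add_cos_sq b
    have e2 := Real.sin_sq_add_cos_sq b'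
    rw [hs] at e1
    linarith
  by_cases hs0 : Real.sin b = 0
  · have eb := sin0 b hb hs0
    have eb' := sin0 b' hb' (hs ▸ hs0)
    have ea := hz (Or.inl eb)
    have ea' := hz' (Or.inl eb')
    subst eb eb' ea ea'
    simp at h00 h11
    exact ⟨rfl, rfl, exp_inj hc hc' h00, exp_inj hd hd' h11⟩
  · have hsC : (I * (Real.sin b : ℂ)) ≠ 0 := mul_ne_zero I_ne_zero (by exact_mod_cast hs0)
    rw [← hs] at h01 h10
    have ec : c = c' := exp_inj hc hc' (mul_right_cancel₀ hsC h01)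
    subst ec
    by_cases hc0 : Real.cos b = 0
    · have hc0' : Real.cos b' = 0 := by
        rw [hc0] at hcc
        exact pow_eq_zero_iff (two_ne_zero) |>.mp (by linarith)
      have eb := cos0 b hb hc0
      have eb' := cos0 b' hb' hc0'
      have ea := hz (Or.inr eb)
      have ea' := hz' (Or.inr eb')
      rw [ea, ea'] at h10
      have := mul_right_cancel₀ hsC (mul_right_cancel₀ (Complex.exp_ne_zero _) h10)
      exact ⟨by rw [ea, ea'], by rw [eb, eb'], rfl, exp_inj hd hd' this⟩
    · have hcC : (Real.cos b : ℂ) ≠ 0 := by exact_mod_cast hc0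
      rcases sq_eq_sq_iff_eq_or_eq_neg.mp hcc with e | e
      · rw [← e] at h00 h11
        have h4 := mul_right_cancel₀ hcC h11
        have h1 := mul_left_cancel₀ (mul_ne_zero (Complex.exp_ne_zero _) hcC) h00
        exact ⟨exp_inj (widen a ha) (widen a' ha') h1, cosinj b hb b' hb' e, rfl,
          exp_inj hd hd' h4⟩
      · exfalso
        have e' : Real.cos b' = - Real.cos b := by linarith
        rw [e'] at h00
        have h1 : exp (a * I) = - exp (a' * I) := by
          apply mul_left_cancel₀ (mul_ne_zero (Complex.exp_ne_zero (c * I)) hcC)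
          rw [h00]
          push_cast
          ring
        have him := congrArg Complex.im h1
        rw [Complex.neg_im, Complex.exp_ofReal_mul_I_im, Complex.exp_ofReal_mul_I_im] at him
        have k1 := snn a ha
        have k2 := snn a' ha'
        have ea := sin0 a ha (by linarith)
        have ea' := sin0 a' ha' (by linarith)
        rw [ea, ea'] at h1
        norm_num [Complex.ext_iff] at h1

lemma euler_exists {U : Matrix (Fin 2) (Fin 2) ℂ} (hU : U ∈ Matrix.unitaryGroup (Fin 2) ℂ) :
    ∃ a b c d : ℝ, a ∈ Set.Ico 0 Real.pi ∧ b ∈ Set.Ico 0 Real.pi ∧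
      c ∈ Set.Ico 0 (2 * Real.pi) ∧ d ∈ Set.Ico 0 (2 * Real.pi) ∧
      ((b = 0 ∨ b = Real.pi / 2) → a = 0) ∧
      U = Rmat d * Qmat c * BSmat b * Qmat a := by
  have hpi := Real.pi_pos
  have hL := Matrix.mem_unitaryGroup_iff'.mp hU
  have hR := Matrix.mem_unitaryGroup_iff.mp hU
  have l00 := congrFun (congrFun hL 0) 0
  have l01 := congrFun (congrFun hL 0) 1
  have l11 := congrFun (congrFun hL 1) 1
  have r00 := congrFun (congrFun hR 0) 0
  simp [Matrix.mul_apply, Fin.sum_univ_two, Matrix.star_apply] at l00 l01 l11 r00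
  simp only [Complex.conj_mul', Complex.mul_conj'] at l00 l11 r00
  have n00 : ‖U 0 0‖ ^ 2 + ‖U 1 0‖ ^ 2 = 1 := by exact_mod_cast l00
  have n11 : ‖U 0 1‖ ^ 2 + ‖U 1 1‖ ^ 2 = 1 := by exact_mod_cast l11
  have m00 : ‖U 0 0‖ ^ 2 + ‖U 0 1‖ ^ 2 = 1 := by exact_mod_cast r00
  have hn1 : ‖U 1 1‖ = ‖U 0 0‖ :=
    (sq_eq_sq₀ (norm_nonneg _) (norm_nonneg _)).mp (by linarith)
  have hn2 : ‖U 1 0‖ = ‖U 0 1‖ :=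
    (sq_eq_sq₀ (norm_nonneg _) (norm_nonneg _)).mp (by linarith)
  have eta : ∀ V : Matrix (Fin 2) (Fin 2) ℂ, U 0 0 = V 0 0 → U 0 1 = V 0 1 → U 1 0 = V 1 0 →
      U 1 1 = V 1 1 → U = V := by
    intro V h1 h2 h3 h4
    ext i j
    fin_cases i <;> fin_cases j <;> assumption
  by_cases h01 : U 0 1 = 0
  · have h10 : U 1 0 = 0 := by
      rw [h01, norm_zero] at hn2
      exact norm_eq_zero.mp hn2
    have u0 : ‖U 0 0‖ = 1 := by
      rw [h01, norm_zero] at m00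
      exact (sq_eq_sq₀ (norm_nonneg _) zero_le_one).mp (by linarith)
    obtain ⟨c, hc, ec⟩ := exp_surj u0
    obtain ⟨d, hd, ed⟩ := exp_surj (hn1.trans u0)
    refine ⟨0, 0, c, d, ⟨le_rfl, hpi⟩, ⟨le_rfl, hpi⟩, hc, hd, fun _ => rfl, ?_⟩
    rw [rhs_form]
    apply eta <;> simp [ec, ed, h01, h10]
  · by_cases h00 : U 0 0 = 0
    · have h11 : U 1 1 = 0 := by
        rw [h00, norm_zero] at hn1
        exact norm_eq_zero.mp hn1
      have u0 : ‖U 0 1‖ = 1 := by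
        rw [h00, norm_zero] at m00
        exact (sq_eq_sq₀ (norm_nonneg _) zero_le_one).mp (by linarith)
      obtain ⟨c, hc, ec⟩ := exp_surj (z := U 0 1 / I) (by simp [u0])
      obtain ⟨d, hd, ed⟩ := exp_surj (z := U 1 0 / I) (by simp [u0, hn2])
      refine ⟨0, Real.pi / 2, c, d, ⟨le_rfl, hpi⟩, ⟨by linarith, by linarith⟩, hc, hd,
        fun _ => rfl, ?_⟩
      rw [rhs_form, Real.cos_pi_div_two, Real.sin_pi_div_two]
      have c1 : U 0 1 / I * I = U 0 1 := div_mul_cancel₀ _ I_ne_zero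
      have c2 : U 1 0 / I * I = U 1 0 := div_mul_cancel₀ _ I_ne_zero
      apply eta <;> simp only [ec, ed, h00, h11] <;> simp [-Complex.div_I, c1, c2]
    · have sp : 0 < ‖U 0 1‖ := norm_pos_iff.mpr h01
      have rp : 0 < ‖U 0 0‖ := norm_pos_iff.mpr h00
      set s : ℝ := ‖U 0 1‖ with hs
      set r : ℝ := ‖U 0 0‖ with hr
      have sC : (s : ℂ) ≠ 0 := by exact_mod_cast sp.ne'
      have rC : (r : ℂ) ≠ 0 := by exact_mod_cast rp.ne'
      obtain ⟨c, hc, ec⟩ := exp_surj (z := U 0 1 / (I * s)) (by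
        rw [norm_div, norm_mul, Complex.norm_I, Complex.norm_real, Real.norm_eq_abs,
          abs_of_pos sp, ← hs, one_mul, div_self sp.ne'])
      obtain ⟨a, ha, e, he, ea⟩ := exp_surj_half (z := U 0 0 / (r * exp (c * I))) (by
        rw [norm_div, norm_mul, Complex.norm_exp_ofReal_mul_I, Complex.norm_real,
          Real.norm_eq_abs, abs_of_pos rp, ← hr, mul_one, div_self rp.ne'])
      have eC : (e : ℂ) * e = 1 := by exact_mod_cast he
      have e0 : e ≠ 0 := by
        rintro rfl
        norm_num at he
      have eC0 : (e : ℂ) ≠ 0 := by exact_mod_cast e0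
      have eabs : |e| = 1 := by
        rcases mul_self_eq_one_iff.mp he with h | h <;> simp [h]
      obtain ⟨d, hd, ed⟩ := exp_surj (z := U 1 1 / (e * r)) (by
        rw [norm_div, norm_mul, Complex.norm_real, Complex.norm_real,
          Real.norm_eq_abs, Real.norm_eq_abs, abs_of_pos rp, hn1, eabs, one_mul,
          div_self rp.ne'])
      have hb2 : (e * r) ^ 2 = r ^ 2 := by linear_combination r ^ 2 * he
      have hle : |e * r| ≤ 1 := by
        rw [abs_le_one_iff_mul_self_le_one]
        nlinarith
      have hcos : Real.cos (Real.arccos (e * r)) = e * r :=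
        Real.cos_arccos (abs_le.mp hle).1 (abs_le.mp hle).2
      have hsin : Real.sin (Real.arccos (e * r)) = s := by
        rw [Real.sin_arccos, hb2, show 1 - r ^ 2 = s ^ 2 by linarith, Real.sqrt_sq sp.le]
      have x01 : U 0 1 = exp (c * I) * (I * s) := by
        rw [ec, div_mul_cancel₀ _ (mul_ne_zero I_ne_zero sC)]
      have x00 : U 0 0 = exp (c * I) * (e * r) * exp (a * I) := by
        rw [div_eq_iff (mul_ne_zero rC (Complex.exp_ne_zero _))] at ea
        rw [ea]
        ring
      have x11 : U 1 1 = exp (d * I) * (e * r) := by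
        rw [ed, div_mul_cancel₀ _ (mul_ne_zero eC0 rC)]
      have x10 : U 1 0 = exp (d * I) * (I * s) * exp (a * I) := by
        have l10 := congrArg (starRingEnd ℂ) l01
        simp only [map_add, map_mul, Complex.conj_conj, map_zero] at l10
        rw [x00, x01, x11] at l10
        simp only [map_mul, Complex.conj_ofReal, Complex.conj_I] at l10
        have kc := conj_exp_mul c
        have kd := conj_exp_mul d
        generalize exp (c * I) = C at *
        generalize exp (d * I) = D at *
        generalize exp (a * I) = A at *
        generalize (starRingEnd ℂ) C = C' at *
        generalize (starRingEnd ℂ) D = D' at *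
        apply mul_right_cancel₀ (mul_ne_zero eC0 rC)
        linear_combination D * l10 - U 1 0 * (e * r) * kd + D * e * r * A * I * s * kc
      refine ⟨a, Real.arccos (e * r), c, d, ha, ⟨Real.arccos_nonneg _, ?_⟩, hc, hd, ?_, ?_⟩
      · refine lt_of_le_of_ne (Real.arccos_le_pi _) fun h => ?_
        rw [h, Real.sin_pi] at hsin
        exact sp.ne hsin
      · rintro (h | h)
        · rw [h, Real.sin_zero] at hsin
          exact absurd hsin sp.ne
        · rw [h, Real.cos_pi_div_two] at hcos
          exact absurd hcos.symm (mul_ne_zero e0 rp.ne')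
      · rw [rhs_form, hcos, hsin]
        apply eta <;> simp [x00, x01, x10, x11]

/-- Existence and uniqueness of the parameters in the two-mode
linear-optical Euler axiom (F):
`BS(α₃)·Q(α₂)·BS(α₁) = R(β₄)·Q(β₃)·BS(β₂)·Q(β₁)` with `β₁, β₂ ∈ [0,π)`,
`β₃, β₄ ∈ [0,2π)`, and `β₁ = 0` whenever `β₂ ∈ {0, π/2}`. -/
theorem lopp_euler_2mode (α₁ α₂ α₃ : ℝ) :
    ∃! β : ℝ × ℝ × ℝ × ℝ, match β with
      | (β₁, β₂, β₃, β₄) =>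
        β₁ ∈ Set.Ico 0 Real.pi ∧ β₂ ∈ Set.Ico 0 Real.pi ∧
        β₃ ∈ Set.Ico 0 (2 * Real.pi) ∧ β₄ ∈ Set.Ico 0 (2 * Real.pi) ∧
        ((β₂ = 0 ∨ β₂ = Real.pi / 2) → β₁ = 0) ∧
        BSmat α₃ * Qmat α₂ * BSmat α₁ = Rmat β₄ * Qmat β₃ * BSmat β₂ * Qmat β₁ := by
  obtain ⟨a, b, c, d, ha, hb, hc, hd, hz, h⟩ := euler_exists
    (mul_mem (mul_mem (BSmat_unitary α₃) (Qmat_unitary α₂)) (BSmat_unitary α₁))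
  refine ⟨(a, b, c, d), ⟨ha, hb, hc, hd, hz, h⟩, ?_⟩
  rintro ⟨a', b', c', d'⟩ ⟨ha', hb', hc', hd', hz', h'⟩
  obtain ⟨rfl, rfl, rfl, rfl⟩ := euler_unique ha hb hc hd hz ha' hb' hc' hd' hz' (h.symm.trans h')
  rfl

end
end

section
/- For all real numbers γ₁, γ₂, γ₃, γ₄ there exists a unique 9-tuple of real numbers (δ₁, …, δ₉) with δ₁, …, δ₆ ∈ [0, π), δ₇, δ₈, δ₉ ∈ [0, 2π), δ₁ = 0 whenever δ₃ ∈ {0, π/2}, δ₂ = 0 whenever δ₄ ∈ {0, π/2}, δ₃ = 0 whenever δ₄ = 0, and δ₅ = 0 whenever δ₆ ∈ {0, π/2}, such that B₁(γ₄) · B₂(γ₃) · Φ₁(γ₂) · B₁(γ₁) = Φ₃(δ₉) · Φ₂(δ₈) · Φ₁(δ₇) · B₂(δ₆) · Φ₂(δ₅) · B₁(δ₄) · B₂(δ₃) · Φ₁(δ₂) · Φ₂(δ₁). (This is the existence and uniqueness of the parameters in the three-mode linear-optical Euler axiom (G) of the paper.) -/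
open Matrix Complex

noncomputable section

/-- Beam splitter on modes 1 and 2. -/
def B1mat (θ : ℝ) : Matrix (Fin 3) (Fin 3) ℂ :=
  !![(Real.cos θ : ℂ), Complex.I * (Real.sin θ : ℂ), 0;
     Complex.I * (Real.sin θ : ℂ), (Real.cos θ : ℂ), 0;
     0, 0, 1]

/-- Beam splitter on modes 2 and 3. -/
def B2mat (θ : ℝ) : Matrix (Fin 3) (Fin 3) ℂ :=
  !![1, 0, 0;
     0, (Real.cos θ : ℂ), Complex.I * (Real.sin θ : ℂ);
     0, Complex.I * (Real.sin θ : ℂ), (Real.cos θ : ℂ)]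

/-- Phase shifter on mode 1. -/
def Phi1mat (φ : ℝ) : Matrix (Fin 3) (Fin 3) ℂ :=
  !![Complex.exp (φ * Complex.I), 0, 0; 0, 1, 0; 0, 0, 1]

/-- Phase shifter on mode 2. -/
def Phi2mat (φ : ℝ) : Matrix (Fin 3) (Fin 3) ℂ :=
  !![1, 0, 0; 0, Complex.exp (φ * Complex.I), 0; 0, 0, 1]

/-- Phase shifter on mode 3. -/
def Phi3mat (φ : ℝ) : Matrix (Fin 3) (Fin 3) ℂ :=
  !![1, 0, 0; 0, 1, 0; 0, 0, Complex.exp (φ * Complex.I)]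

lemma sq_add_sq_E (α : ℝ) : cexp (α * I) * cexp (-(α * I)) = 1 := by
  rw [← Complex.exp_add]; simp

lemma phase_exists (z : ℂ) (hz : ‖z‖ = 1) :
    ∃ α ∈ Set.Ico (0:ℝ) (2 * Real.pi), z = cexp (α * I) := by
  have hp := Real.pi_pos
  have h0 : z = cexp (z.arg * I) := by
    have := Complex.norm_mul_exp_arg_mul_I z
    rw [hz] at this; simpa using this.symm
  have h1 := Complex.neg_pi_lt_arg z
  have h2 := Complex.arg_le_pi z
  by_cases h : 0 ≤ z.arg
  · exact ⟨z.arg, ⟨h, by linarith⟩, h0⟩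
  · refine ⟨z.arg + 2 * Real.pi, ⟨by linarith, by linarith⟩, ?_⟩
    push_cast
    rw [add_mul, Complex.exp_add, Complex.exp_two_pi_mul_I, mul_one]; exact h0

lemma phase_unique {α β : ℝ} (hα : α ∈ Set.Ico (0:ℝ) (2 * Real.pi))
    (hβ : β ∈ Set.Ico (0:ℝ) (2 * Real.pi)) (h : cexp (α * I) = cexp (β * I)) : α = β := by
  have hp := Real.pi_pos
  obtain ⟨n, hn⟩ := Complex.exp_eq_exp_iff_exists_int.mp h
  have hn' : α = β + n * (2 * Real.pi) := by
    have := congrArg Complex.im hn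
    simpa using this
  have h1 : n = 0 := by
    have a1 : (n:ℝ) < 1 := by nlinarith [hα.1, hα.2, hβ.1, hβ.2]
    have a2 : (-1:ℝ) < n := by nlinarith [hα.1, hα.2, hβ.1, hβ.2]
    have a1' : n < 1 := by exact_mod_cast a1
    have a2' : -1 < n := by exact_mod_cast a2
    omega
  simpa [h1] using hn'

/-- signed polar form -/
lemma spolar_exists (z : ℂ) :
    ∃ x : ℝ, ∃ α ∈ Set.Ico (0:ℝ) Real.pi, z = x * cexp (α * I) ∧ (x = 0 → α = 0) ∧
      x ^ 2 = ‖z‖ ^ 2 := by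
  have hp := Real.pi_pos
  by_cases hz : z = 0
  · exact ⟨0, 0, ⟨le_rfl, hp⟩, by simp [hz], by simp, by simp [hz]⟩
  have hn : ‖z‖ ≠ 0 := by simpa using hz
  have hnc : (‖z‖ : ℂ) ≠ 0 := by exact_mod_cast hn
  obtain ⟨α, hα, h⟩ := phase_exists (z / ‖z‖) (by simp [hn])
  have hz' : z = ‖z‖ * cexp (α * I) := by rw [← h]; field_simp
  by_cases hlt : α < Real.pi
  · exact ⟨‖z‖, α, ⟨hα.1, hlt⟩, hz', fun h => absurd h hn, rfl⟩
  · refine ⟨-‖z‖, α - Real.pi, ⟨by linarith, by linarith [hα.2]⟩, ?_, fun h => absurd (neg_eq_zero.mp h) hn,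
      by ring⟩
    push_cast
    rw [sub_mul, Complex.exp_sub, Complex.exp_pi_mul_I]
    rw [neg_mul, div_neg, div_one, mul_neg, neg_neg]; exact hz'

lemma spolar_unique {x y α β : ℝ} (hα : α ∈ Set.Ico (0:ℝ) Real.pi)
    (hβ : β ∈ Set.Ico (0:ℝ) Real.pi) (hx : x = 0 → α = 0) (hy : y = 0 → β = 0)
    (h : (x:ℂ) * cexp (α * I) = y * cexp (β * I)) : x = y ∧ α = β := by
  have e1 : x * Real.cos α = y * Real.cos β := by
    have := congrArg Complex.re h
    simpa [Complex.exp_ofReal_mul_I_re, Complex.exp_ofReal_mul_I_im] using this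
  have e2 : x * Real.sin α = y * Real.sin β := by
    have := congrArg Complex.im h
    simpa [Complex.exp_ofReal_mul_I_re, Complex.exp_ofReal_mul_I_im] using this
  have q1 := Real.sin_sq_add_cos_sq α
  have q2 := Real.sin_sq_add_cos_sq β
  have hxy : x ^ 2 = y ^ 2 := by
    have : (x * Real.cos α)^2 + (x * Real.sin α)^2 = (y * Real.cos β)^2 + (y * Real.sin β)^2 := by
      rw [e1, e2]
    nlinarith
  by_cases hx0 : x = 0
  · have hy0 : y = 0 := by simpa [hx0] using hxy.symm
    exact ⟨by rw [hx0, hy0], by rw [hx hx0, hy hy0]⟩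
  have hab : x * Real.sin (α - β) = 0 := by
    have hc : y * Real.sin (α - β) = 0 ∨ x * Real.sin (α - β) = 0 := by
      left
      have : x * (y * Real.sin (α - β)) = 0 := by
        rw [Real.sin_sub]
        linear_combination y * Real.cos β * e2 - y * Real.sin β * e1
      exact (mul_eq_zero.mp this).resolve_left hx0
    rcases hc with hc | hc
    · rcases mul_eq_zero.mp hc with h | h
      · exfalso; apply hx0; simpa [h] using hxy
      · rw [h, mul_zero]
    · exact hc
  have hs := (mul_eq_zero.mp hab).resolve_left hx0
  have hd : α - β = 0 := by
    rw [Real.sin_eq_zero_iff_of_lt_of_lt (by linarith [hα.1, hβ.2]) (by linarith [hα.2, hβ.1])] at hs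
    exact hs
  have hab : α = β := by linarith
  refine ⟨?_, hab⟩
  rw [hab] at h
  have := mul_right_cancel₀ (Complex.exp_ne_zero _) h
  exact_mod_cast this

/-- cosine polar form -/
lemma cpolar_exists (z : ℂ) (hz : ‖z‖ ^ 2 < 1) :
    ∃ θ ∈ Set.Ioo (0:ℝ) Real.pi, ∃ α ∈ Set.Ico (0:ℝ) Real.pi,
      z = (Real.cos θ : ℂ) * cexp (α * I) ∧ (θ = Real.pi / 2 → α = 0) ∧
      Real.sin θ ^ 2 = 1 - ‖z‖ ^ 2 ∧ 0 < Real.sin θ := by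
  obtain ⟨x, α, hα, h1, h2, h3⟩ := spolar_exists z
  have hx : x ^ 2 < 1 := by rw [h3]; exact hz
  have hx1 : -1 < x := by nlinarith
  have hx2 : x < 1 := by nlinarith
  have hc : Real.cos (Real.arccos x) = x := Real.cos_arccos hx1.le hx2.le
  have hth : Real.arccos x ∈ Set.Ioo (0:ℝ) Real.pi := by
    refine ⟨Real.arccos_pos.mpr hx2, lt_of_le_of_ne (Real.arccos_le_pi x) ?_⟩
    intro h; rw [h, Real.cos_pi] at hc; linarith
  refine ⟨Real.arccos x, hth, α, hα, by rw [hc]; exact h1, ?_, ?_, Real.sin_pos_of_mem_Ioo hth⟩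
  · intro h; apply h2; rw [← hc, h, Real.cos_pi_div_two]
  · rw [Real.sin_sq, hc, h3]

lemma cos_eq_zero_pi {θ : ℝ} (h : θ ∈ Set.Ico (0:ℝ) Real.pi) (hc : Real.cos θ = 0) :
    θ = Real.pi / 2 := by
  apply Real.injOn_cos ⟨h.1, h.2.le⟩ ⟨by linarith [Real.pi_pos], by linarith [Real.pi_pos]⟩
  rw [hc, Real.cos_pi_div_two]

lemma sin_pos_or {θ : ℝ} (h : θ ∈ Set.Ico (0:ℝ) Real.pi) : θ = 0 ∨ 0 < Real.sin θ := by
  rcases h.1.eq_or_lt with h0 | h0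
  · exact Or.inl h0.symm
  · exact Or.inr (Real.sin_pos_of_pos_of_lt_pi h0 h.2)

lemma cpolar_unique {θ η α β : ℝ} (hθ : θ ∈ Set.Ico (0:ℝ) Real.pi)
    (hη : η ∈ Set.Ico (0:ℝ) Real.pi) (hα : α ∈ Set.Ico (0:ℝ) Real.pi)
    (hβ : β ∈ Set.Ico (0:ℝ) Real.pi) (hx : θ = Real.pi / 2 → α = 0) (hy : η = Real.pi / 2 → β = 0)
    (h : (Real.cos θ:ℂ) * cexp (α * I) = (Real.cos η : ℂ) * cexp (β * I)) : θ = η ∧ α = β := by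
  obtain ⟨h1, h2⟩ := spolar_unique hα hβ (fun h => hx (cos_eq_zero_pi hθ h))
    (fun h => hy (cos_eq_zero_pi hη h)) h
  exact ⟨Real.injOn_cos ⟨hθ.1, hθ.2.le⟩ ⟨hη.1, hη.2.le⟩ h1, h2⟩

/-- positive polar form uniqueness -/
lemma ppolar_unique {x y α β : ℝ} (hx : 0 < x) (hy : 0 < y)
    (hα : α ∈ Set.Ico (0:ℝ) (2 * Real.pi)) (hβ : β ∈ Set.Ico (0:ℝ) (2 * Real.pi))
    (h : (x:ℂ) * cexp (α * I) = y * cexp (β * I)) : x = y ∧ α = β := by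
  have hn := congrArg norm h
  simp only [norm_mul, Complex.norm_exp_ofReal_mul_I, mul_one, Complex.norm_real, Real.norm_eq_abs,
    abs_of_pos hx, abs_of_pos hy] at hn
  refine ⟨hn, phase_unique hα hβ ?_⟩
  rw [hn] at h
  exact mul_left_cancel₀ (by exact_mod_cast hy.ne') h

lemma ppolar_exists (z : ℂ) (hz : z ≠ 0) :
    ∃ α ∈ Set.Ico (0:ℝ) (2 * Real.pi), z = (‖z‖ : ℂ) * cexp (α * I) := by
  have hn : ‖z‖ ≠ 0 := by simpa using hz
  have hnc : (‖z‖ : ℂ) ≠ 0 := by exact_mod_cast hn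
  obtain ⟨α, hα, h⟩ := phase_exists (z / ‖z‖) (by simp [hn])
  exact ⟨α, hα, by rw [← h]; field_simp⟩

lemma row_exists (a b c : ℂ) (h : ‖a‖ ^ 2 + ‖b‖ ^ 2 + ‖c‖ ^ 2 = 1) :
    ∃ δ₁ δ₂ δ₃ δ₄ δ₇ : ℝ, δ₁ ∈ Set.Ico 0 Real.pi ∧ δ₂ ∈ Set.Ico 0 Real.pi ∧
      δ₃ ∈ Set.Ico 0 Real.pi ∧ δ₄ ∈ Set.Ico 0 Real.pi ∧ δ₇ ∈ Set.Ico 0 (2 * Real.pi) ∧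
      ((δ₃ = 0 ∨ δ₃ = Real.pi / 2) → δ₁ = 0) ∧
      ((δ₄ = 0 ∨ δ₄ = Real.pi / 2) → δ₂ = 0) ∧ (δ₄ = 0 → δ₃ = 0) ∧
      a = cexp (δ₇ * I) * ((Real.cos δ₄ : ℂ) * cexp (δ₂ * I)) ∧
      b = cexp (δ₇ * I) * (I * (Real.sin δ₄ : ℂ) * ((Real.cos δ₃ : ℂ) * cexp (δ₁ * I))) ∧
      c = - (cexp (δ₇ * I) * ((Real.sin δ₄ : ℂ) * (Real.sin δ₃ : ℂ))) := by
  have hp := Real.pi_pos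
  have z0 : (0:ℝ) ∈ Set.Ico 0 Real.pi := ⟨le_rfl, hp⟩
  by_cases hc : c = 0
  · subst hc
    by_cases hb : b = 0
    · subst hb
      obtain ⟨δ₇, h7, e7⟩ := phase_exists a (by
        have h' : ‖a‖ ^ 2 = 1 := by simpa using h
        nlinarith [norm_nonneg a])
      exact ⟨0, 0, 0, 0, δ₇, z0, z0, z0, z0, h7, by simp, by simp, by simp, by simp [e7], by simp, by simp⟩
    · obtain ⟨δ₇, h7, e7⟩ := ppolar_exists (-I * b) (by simp [hb])
      have hb' : 0 < ‖b‖ := by simpa using hb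
      have hz : ‖a * cexp (-(δ₇ * I))‖ = ‖a‖ := by
        rw [norm_mul, ← neg_mul, ← Complex.ofReal_neg, Complex.norm_exp_ofReal_mul_I, mul_one]
      obtain ⟨δ₄, h4, δ₂, h2, e, k1, k2, k3⟩ := cpolar_exists (a * cexp (-(δ₇ * I)))
        (by rw [hz]; simp at h; nlinarith)
      have hs : Real.sin δ₄ = ‖b‖ := by
        rw [hz] at k2; simp at h; nlinarith
      refine ⟨0, δ₂, 0, δ₄, δ₇, z0, h2, z0, ⟨h4.1.le, h4.2⟩, h7, by simp, ?_, by simp, ?_, ?_, by simp⟩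
      · rintro (h | h)
        · exact absurd h h4.1.ne'
        · exact k1 h
      · rw [← e]; linear_combination (-a) * sq_add_sq_E δ₇
      · rw [hs]; simp at e7 ⊢
        linear_combination I * e7 + b * I_mul_I
  · obtain ⟨δ₇, h7, e7⟩ := ppolar_exists (-c) (by simp [hc])
    have hc' : 0 < ‖c‖ := by simpa using hc
    have hz : ∀ w : ℂ, ‖w * cexp (-(δ₇ * I))‖ = ‖w‖ := by
      intro w
      rw [norm_mul, ← neg_mul, ← Complex.ofReal_neg, Complex.norm_exp_ofReal_mul_I, mul_one]
    obtain ⟨δ₄, h4, δ₂, h2, e, k1, k2, k3⟩ := cpolar_exists (a * cexp (-(δ₇ * I)))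
        (by rw [hz]; nlinarith [sq_nonneg ‖b‖])
    rw [hz] at k2
    have hs0 : (Real.sin δ₄ : ℂ) ≠ 0 := by exact_mod_cast k3.ne'
    have hw : ‖-I * b * cexp (-(δ₇ * I)) / (Real.sin δ₄ : ℂ)‖ ^ 2 = ‖b‖ ^ 2 / Real.sin δ₄ ^ 2 := by
      rw [norm_div, hz, Complex.norm_real]; simp [div_pow]
    obtain ⟨δ₃, h3, δ₁, h1, e', m1, m2, m3⟩ :=
      cpolar_exists (-I * b * cexp (-(δ₇ * I)) / (Real.sin δ₄ : ℂ)) (by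
        rw [hw, div_lt_one (by positivity)]; nlinarith)
    have hs : Real.sin δ₄ * Real.sin δ₃ = ‖c‖ := by
      rw [hw] at m2
      have : (Real.sin δ₄ * Real.sin δ₃) ^ 2 = ‖c‖ ^ 2 := by
        rw [mul_pow, m2]; field_simp; nlinarith
      exact (sq_eq_sq₀ (by positivity) (by positivity)).mp this
    refine ⟨δ₁, δ₂, δ₃, δ₄, δ₇, h1, h2, ⟨h3.1.le, h3.2⟩, ⟨h4.1.le, h4.2⟩, h7, ?_, ?_, ?_, ?_, ?_, ?_⟩
    · rintro (h | h)
      · exact absurd h h3.1.ne'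
      · exact m1 h
    · rintro (h | h)
      · exact absurd h h4.1.ne'
      · exact k1 h
    · intro h; exact absurd h h4.1.ne'
    · rw [← e]; linear_combination (-a) * sq_add_sq_E δ₇
    · rw [← e']; field_simp
      linear_combination (-b) * sq_add_sq_E δ₇ + b * cexp (δ₇ * I) * cexp (-(δ₇ * I)) * I_mul_I
    · rw [← Complex.ofReal_mul, hs]
      rw [norm_neg] at e7
      linear_combination -e7

lemma row_unique {δ₁ δ₂ δ₃ δ₄ δ₇ η₁ η₂ η₃ η₄ η₇ : ℝ}
    (h1 : δ₁ ∈ Set.Ico 0 Real.pi) (h2 : δ₂ ∈ Set.Ico 0 Real.pi)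
    (h3 : δ₃ ∈ Set.Ico 0 Real.pi) (h4 : δ₄ ∈ Set.Ico 0 Real.pi) (h7 : δ₇ ∈ Set.Ico 0 (2 * Real.pi))
    (p1 : (δ₃ = 0 ∨ δ₃ = Real.pi / 2) → δ₁ = 0)
    (p2 : (δ₄ = 0 ∨ δ₄ = Real.pi / 2) → δ₂ = 0) (p3 : δ₄ = 0 → δ₃ = 0)
    (h1' : η₁ ∈ Set.Ico 0 Real.pi) (h2' : η₂ ∈ Set.Ico 0 Real.pi)
    (h3' : η₃ ∈ Set.Ico 0 Real.pi) (h4' : η₄ ∈ Set.Ico 0 Real.pi) (h7' : η₇ ∈ Set.Ico 0 (2 * Real.pi))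
    (p1' : (η₃ = 0 ∨ η₃ = Real.pi / 2) → η₁ = 0)
    (p2' : (η₄ = 0 ∨ η₄ = Real.pi / 2) → η₂ = 0) (p3' : η₄ = 0 → η₃ = 0)
    (ea : cexp (δ₇ * I) * ((Real.cos δ₄ : ℂ) * cexp (δ₂ * I)) =
      cexp (η₇ * I) * ((Real.cos η₄ : ℂ) * cexp (η₂ * I)))
    (eb : cexp (δ₇ * I) * (I * (Real.sin δ₄ : ℂ) * ((Real.cos δ₃ : ℂ) * cexp (δ₁ * I))) =
      cexp (η₇ * I) * (I * (Real.sin η₄ : ℂ) * ((Real.cos η₃ : ℂ) * cexp (η₁ * I))))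
    (ec : - (cexp (δ₇ * I) * ((Real.sin δ₄ : ℂ) * (Real.sin δ₃ : ℂ))) =
      - (cexp (η₇ * I) * ((Real.sin η₄ : ℂ) * (Real.sin η₃ : ℂ)))) :
    δ₁ = η₁ ∧ δ₂ = η₂ ∧ δ₃ = η₃ ∧ δ₄ = η₄ ∧ δ₇ = η₇ := by
  have ec' : cexp (δ₇ * I) * ((Real.sin δ₄ : ℂ) * (Real.sin δ₃ : ℂ)) =
      cexp (η₇ * I) * ((Real.sin η₄ : ℂ) * (Real.sin η₃ : ℂ)) := neg_injective ec
  have key : δ₇ = η₇ → δ₂ = η₂ ∧ δ₄ = η₄ := by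
    intro h; rw [h] at ea
    have ea' := mul_left_cancel₀ (Complex.exp_ne_zero _) ea
    obtain ⟨u, v⟩ := cpolar_unique h4 h4' h2 h2' (fun h => p2 (Or.inr h)) (fun h => p2' (Or.inr h)) ea'
    exact ⟨v, u⟩
  -- classify
  have cls : ∀ {x3 x4 : ℝ}, x3 ∈ Set.Ico 0 Real.pi → x4 ∈ Set.Ico 0 Real.pi → (x4 = 0 → x3 = 0) →
      (x4 = 0 ∧ x3 = 0) ∨ (0 < Real.sin x4 ∧ x3 = 0) ∨ (0 < Real.sin x4 ∧ 0 < Real.sin x3) := by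
    intro x3 x4 a b c
    rcases sin_pos_or b with h | h
    · exact Or.inl ⟨h, c h⟩
    · rcases sin_pos_or a with h' | h'
      · exact Or.inr (Or.inl ⟨h, h'⟩)
      · exact Or.inr (Or.inr ⟨h, h'⟩)
  have nz : ∀ {x : ℝ}, 0 < Real.sin x → Complex.sin (x:ℂ) ≠ 0 := by
    intro x hx; rw [← Complex.ofReal_sin]; exact_mod_cast hx.ne'
  rcases cls h3 h4 p3 with ⟨a, b⟩ | ⟨a, b⟩ | ⟨a, b⟩ <;>
  rcases cls h3' h4' p3' with ⟨a', b'⟩ | ⟨a', b'⟩ | ⟨a', b'⟩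
  · have q1 := p1 (Or.inl b); have q1' := p1' (Or.inl b')
    have q2 := p2 (Or.inl a); have q2' := p2' (Or.inl a')
    refine ⟨by rw [q1, q1'], by rw [q2, q2'], by rw [b, b'], by rw [a, a'], phase_unique h7 h7' ?_⟩
    simpa [a, a', q2, q2'] using ea
  · exfalso
    simp [a, b', nz a'] at eb
  · exfalso
    simp [a, nz b', nz a'] at ec'
  · exfalso
    simp [a', b, nz a] at eb
  · have q1 := p1 (Or.inl b); have q1' := p1' (Or.inl b')
    have h7e : δ₇ = η₇ := by
      refine (ppolar_unique a a' h7 h7' ?_).2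
      rw [b, b', q1, q1'] at eb
      simp only [Real.cos_zero, Complex.ofReal_zero, zero_mul, Complex.exp_zero, Complex.ofReal_one] at eb
      linear_combination -I * eb + ((Real.sin δ₄ : ℂ) * cexp (δ₇ * I) - (Real.sin η₄ : ℂ) * cexp (η₇ * I)) * I_mul_I
    obtain ⟨u, v⟩ := key h7e
    exact ⟨by rw [q1, q1'], u, by rw [b, b'], v, h7e⟩
  · exfalso
    simp [b, nz b', nz a'] at ec'
  · exfalso
    simp [a', nz b, nz a] at ec'
  · exfalso
    simp [b', nz b, nz a] at ec'
  · have h7e : δ₇ = η₇ := by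
      refine (ppolar_unique (mul_pos a b) (mul_pos a' b') h7 h7' ?_).2
      push_cast at ec' ⊢
      linear_combination ec'
    obtain ⟨u, v⟩ := key h7e
    rw [h7e, v] at eb
    have eb1 := mul_left_cancel₀ (Complex.exp_ne_zero _) eb
    have eb2 := mul_left_cancel₀ (mul_ne_zero I_ne_zero (by exact_mod_cast a'.ne')) eb1
    obtain ⟨s, t⟩ := cpolar_unique h3 h3' h1 h1' (fun h => p1 (Or.inr h)) (fun h => p1' (Or.inr h)) eb2
    exact ⟨t, u, s, v, h7e⟩

lemma block_exists (p q r s : ℂ) (h1 : ‖p‖ ^ 2 + ‖q‖ ^ 2 = 1) (h2 : ‖r‖ ^ 2 + ‖s‖ ^ 2 = 1)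
    (h3 : p * star r + q * star s = 0) :
    ∃ δ₅ δ₆ δ₈ δ₉ : ℝ, δ₅ ∈ Set.Ico 0 Real.pi ∧ δ₆ ∈ Set.Ico 0 Real.pi ∧
      δ₈ ∈ Set.Ico 0 (2 * Real.pi) ∧ δ₉ ∈ Set.Ico 0 (2 * Real.pi) ∧
      ((δ₆ = 0 ∨ δ₆ = Real.pi / 2) → δ₅ = 0) ∧
      p = cexp (δ₈ * I) * ((Real.cos δ₆ : ℂ) * cexp (δ₅ * I)) ∧
      q = cexp (δ₈ * I) * (I * (Real.sin δ₆ : ℂ)) ∧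
      r = cexp (δ₉ * I) * (I * (Real.sin δ₆ : ℂ) * cexp (δ₅ * I)) ∧
      s = cexp (δ₉ * I) * (Real.cos δ₆ : ℂ) := by
  have hp := Real.pi_pos
  have z0 : (0:ℝ) ∈ Set.Ico 0 Real.pi := ⟨le_rfl, hp⟩
  by_cases hq : q = 0
  · subst hq
    have hpn : ‖p‖ = 1 := by simp at h1; exact h1.resolve_right (by linarith [norm_nonneg p])
    have hp0 : p ≠ 0 := by intro h; simp [h] at hpn
    have hr : r = 0 := by simpa [hp0] using h3
    subst hr
    have hsn : ‖s‖ = 1 := by simp at h2; exact h2.resolve_right (by linarith [norm_nonneg s])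
    obtain ⟨δ₈, h8, e8⟩ := phase_exists p hpn
    obtain ⟨δ₉, h9, e9⟩ := phase_exists s hsn
    exact ⟨0, 0, δ₈, δ₉, z0, z0, h8, h9, by simp, by simp [e8], by simp, by simp, by simp [e9]⟩
  · have hq' : 0 < ‖q‖ := by simpa using hq
    obtain ⟨δ₈, h8, e8⟩ := ppolar_exists (-I * q) (by simp [hq])
    have hz : ∀ (x : ℝ) (w : ℂ), ‖w * cexp (-(x * I))‖ = ‖w‖ := by
      intro x w
      rw [norm_mul, ← neg_mul, ← Complex.ofReal_neg, Complex.norm_exp_ofReal_mul_I, mul_one]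
    obtain ⟨δ₆, h6, δ₅, h5, e, k1, k2, k3⟩ := cpolar_exists (p * cexp (-(δ₈ * I)))
        (by rw [hz]; nlinarith)
    rw [hz] at k2
    have hs : Real.sin δ₆ = ‖q‖ := by nlinarith
    have hs0 : (Real.sin δ₆ : ℂ) ≠ 0 := by exact_mod_cast k3.ne'
    have hr : ‖r‖ = ‖q‖ := by
      have h4 : ‖p‖ * ‖r‖ = ‖q‖ * ‖s‖ := by
        have := congrArg norm (eq_neg_of_add_eq_zero_left h3)
        simpa using this
      have : ‖r‖ ^ 2 = ‖q‖ ^ 2 := by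
        have h5 : (‖p‖ * ‖r‖) ^ 2 = (‖q‖ * ‖s‖) ^ 2 := by rw [h4]
        linear_combination h5 - ‖r‖^2 * h1 + ‖q‖^2 * h2
      exact (sq_eq_sq₀ (by positivity) (by positivity)).mp this
    obtain ⟨δ₉, h9, e9⟩ := phase_exists (-I * r * cexp (-(δ₅ * I)) / (Real.sin δ₆ : ℂ)) (by
      rw [norm_div, hz, Complex.norm_real, hs]; simp [hr, hq'.ne'])
    have ep : p = cexp (δ₈ * I) * ((Real.cos δ₆ : ℂ) * cexp (δ₅ * I)) := by
      rw [← e]; linear_combination (-p) * sq_add_sq_E δ₈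
    have eq : q = cexp (δ₈ * I) * (I * (Real.sin δ₆ : ℂ)) := by
      rw [hs]; simp at e8
      linear_combination I * e8 + q * I_mul_I
    have er : r = cexp (δ₉ * I) * (I * (Real.sin δ₆ : ℂ) * cexp (δ₅ * I)) := by
      have e9' := (div_eq_iff hs0).mp e9
      linear_combination I * cexp (δ₅ * I) * e9' + (-r) * sq_add_sq_E δ₅ + r * cexp (δ₅ * I) * cexp (-(δ₅ * I)) * I_mul_I
    refine ⟨δ₅, δ₆, δ₈, δ₉, h5, ⟨h6.1.le, h6.2⟩, h8, h9, ?_, ep, eq, er, ?_⟩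
    · rintro (h | h)
      · exact absurd h h6.1.ne'
      · exact k1 h
    · have h3' := congrArg star h3
      have cE : ∀ x : ℝ, (starRingEnd ℂ) (cexp (x * I)) = cexp (-(x * I)) := by
        intro x; rw [← Complex.exp_conj]; simp
      have cs : ∀ x : ℝ, (starRingEnd ℂ) (Complex.sin (x:ℂ)) = Complex.sin x := by
        intro x; rw [← Complex.ofReal_sin, Complex.conj_ofReal]
      have cc : ∀ x : ℝ, (starRingEnd ℂ) (Complex.cos (x:ℂ)) = Complex.cos x := by
        intro x; rw [← Complex.ofReal_cos, Complex.conj_ofReal]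
      simp only [star_add, star_mul', star_star, star_zero] at h3'
      rw [ep, eq] at h3'
      simp [cE, cs, cc] at h3'
      rw [er] at h3'
      simp only [Complex.ofReal_sin, Complex.ofReal_cos] at h3' hs0 ⊢
      have : (I * cexp (-(δ₈ * I)) * Complex.sin δ₆) * (s - cexp (δ₉ * I) * Complex.cos δ₆) = 0 := by
        linear_combination -h3' + cexp (-(δ₈ * I)) * Complex.cos δ₆ * cexp (δ₉ * I) * I * Complex.sin δ₆ * sq_add_sq_E δ₅
      have h0 := (mul_eq_zero.mp this).resolve_left
        (mul_ne_zero (mul_ne_zero I_ne_zero (Complex.exp_ne_zero _)) hs0)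
      linear_combination h0

lemma block_unique {δ₅ δ₆ δ₈ δ₉ η₅ η₆ η₈ η₉ : ℝ}
    (h5 : δ₅ ∈ Set.Ico 0 Real.pi) (h6 : δ₆ ∈ Set.Ico 0 Real.pi)
    (h8 : δ₈ ∈ Set.Ico 0 (2 * Real.pi)) (h9 : δ₉ ∈ Set.Ico 0 (2 * Real.pi))
    (p : (δ₆ = 0 ∨ δ₆ = Real.pi / 2) → δ₅ = 0)
    (h5' : η₅ ∈ Set.Ico 0 Real.pi) (h6' : η₆ ∈ Set.Ico 0 Real.pi)
    (h8' : η₈ ∈ Set.Ico 0 (2 * Real.pi)) (h9' : η₉ ∈ Set.Ico 0 (2 * Real.pi))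
    (p' : (η₆ = 0 ∨ η₆ = Real.pi / 2) → η₅ = 0)
    (e1 : cexp (δ₈ * I) * ((Real.cos δ₆ : ℂ) * cexp (δ₅ * I)) =
      cexp (η₈ * I) * ((Real.cos η₆ : ℂ) * cexp (η₅ * I)))
    (e2 : cexp (δ₈ * I) * (I * (Real.sin δ₆ : ℂ)) = cexp (η₈ * I) * (I * (Real.sin η₆ : ℂ)))
    (e3 : cexp (δ₉ * I) * (I * (Real.sin δ₆ : ℂ) * cexp (δ₅ * I)) =
      cexp (η₉ * I) * (I * (Real.sin η₆ : ℂ) * cexp (η₅ * I)))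
    (e4 : cexp (δ₉ * I) * (Real.cos δ₆ : ℂ) = cexp (η₉ * I) * (Real.cos η₆ : ℂ)) :
    δ₅ = η₅ ∧ δ₆ = η₆ ∧ δ₈ = η₈ ∧ δ₉ = η₉ := by
  have nz : ∀ {x : ℝ}, 0 < Real.sin x → Complex.sin (x:ℂ) ≠ 0 := by
    intro x hx; rw [← Complex.ofReal_sin]; exact_mod_cast hx.ne'
  rcases sin_pos_or h6 with a | a <;> rcases sin_pos_or h6' with a' | a'
  · have q := p (Or.inl a); have q' := p' (Or.inl a')
    rw [a, a', q, q'] at e1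
    rw [a, a'] at e4
    exact ⟨by rw [q, q'], by rw [a, a'], phase_unique h8 h8' (by simpa using e1),
      phase_unique h9 h9' (by simpa using e4)⟩
  · exfalso; simp [a, nz a'] at e2
  · exfalso; simp [a', nz a] at e2
  · have h8e : δ₈ = η₈ := by
      refine (ppolar_unique a a' h8 h8' ?_).2
      linear_combination -I * e2 + ((Real.sin δ₆ : ℂ) * cexp (δ₈ * I) - (Real.sin η₆ : ℂ) * cexp (η₈ * I)) * I_mul_I
    rw [h8e] at e1
    obtain ⟨s, t⟩ := cpolar_unique h6 h6' h5 h5' (fun h => p (Or.inr h)) (fun h => p' (Or.inr h))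
      (mul_left_cancel₀ (Complex.exp_ne_zero _) e1)
    refine ⟨t, s, h8e, phase_unique h9 h9' ?_⟩
    rw [s, t] at e3
    exact mul_right_cancel₀ (mul_ne_zero (mul_ne_zero I_ne_zero (by exact_mod_cast a'.ne'))
      (Complex.exp_ne_zero _)) e3

lemma conjE (x : ℝ) : (starRingEnd ℂ) (cexp (x * I)) = cexp (-(x * I)) := by
  rw [← Complex.exp_conj]; simp

lemma conjS (x : ℝ) : (starRingEnd ℂ) (Complex.sin (x:ℂ)) = Complex.sin x := by
  rw [← Complex.ofReal_sin, Complex.conj_ofReal]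

lemma conjC (x : ℝ) : (starRingEnd ℂ) (Complex.cos (x:ℂ)) = Complex.cos x := by
  rw [← Complex.ofReal_cos, Complex.conj_ofReal]

lemma B1_unitary (θ : ℝ) : B1mat θ ∈ Matrix.unitaryGroup (Fin 3) ℂ := by
  rw [Matrix.mem_unitaryGroup_iff]
  have := Complex.sin_sq_add_cos_sq (θ : ℂ)
  ext i j
  fin_cases i <;> fin_cases j <;>
    simp [B1mat, Matrix.mul_apply, Fin.sum_univ_three, Matrix.star_apply, conjS, conjC] <;>
    first
    | ring1
    | linear_combination this - Complex.sin (θ : ℂ) ^ 2 * I_mul_I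

lemma B2_unitary (θ : ℝ) : B2mat θ ∈ Matrix.unitaryGroup (Fin 3) ℂ := by
  rw [Matrix.mem_unitaryGroup_iff]
  have := Complex.sin_sq_add_cos_sq (θ : ℂ)
  ext i j
  fin_cases i <;> fin_cases j <;>
    simp [B2mat, Matrix.mul_apply, Fin.sum_univ_three, Matrix.star_apply, conjS, conjC] <;>
    first
    | ring1
    | linear_combination this - Complex.sin (θ : ℂ) ^ 2 * I_mul_I

lemma Phi1_unitary (θ : ℝ) : Phi1mat θ ∈ Matrix.unitaryGroup (Fin 3) ℂ := by
  rw [Matrix.mem_unitaryGroup_iff]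
  ext i j
  fin_cases i <;> fin_cases j <;>
    simp [Phi1mat, Matrix.mul_apply, Fin.sum_univ_three, Matrix.star_apply, conjE, sq_add_sq_E]

lemma Phi2_unitary (θ : ℝ) : Phi2mat θ ∈ Matrix.unitaryGroup (Fin 3) ℂ := by
  rw [Matrix.mem_unitaryGroup_iff]
  ext i j
  fin_cases i <;> fin_cases j <;>
    simp [Phi2mat, Matrix.mul_apply, Fin.sum_univ_three, Matrix.star_apply, conjE, sq_add_sq_E]

/-- Right-hand factor. -/
def Rfac (δ₁ δ₂ δ₃ δ₄ : ℝ) : Matrix (Fin 3) (Fin 3) ℂ :=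
  B1mat δ₄ * B2mat δ₃ * Phi1mat δ₂ * Phi2mat δ₁

/-- Left-hand factor. -/
def Lfac (δ₅ δ₆ δ₇ δ₈ δ₉ : ℝ) : Matrix (Fin 3) (Fin 3) ℂ :=
  Phi3mat δ₉ * Phi2mat δ₈ * Phi1mat δ₇ * B2mat δ₆ * Phi2mat δ₅

lemma Rfac_unitary (δ₁ δ₂ δ₃ δ₄ : ℝ) : Rfac δ₁ δ₂ δ₃ δ₄ ∈ Matrix.unitaryGroup (Fin 3) ℂ :=
  mul_mem (mul_mem (mul_mem (B1_unitary _) (B2_unitary _)) (Phi1_unitary _)) (Phi2_unitary _)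

lemma Lfac_eq (δ₅ δ₆ δ₇ δ₈ δ₉ : ℝ) : Lfac δ₅ δ₆ δ₇ δ₈ δ₉ =
    !![cexp (δ₇ * I), 0, 0;
       0, cexp (δ₈ * I) * ((Real.cos δ₆ : ℂ) * cexp (δ₅ * I)), cexp (δ₈ * I) * (I * (Real.sin δ₆ : ℂ));
       0, cexp (δ₉ * I) * (I * (Real.sin δ₆ : ℂ) * cexp (δ₅ * I)),
         cexp (δ₉ * I) * (Real.cos δ₆ : ℂ)] := by
  ext i j
  fin_cases i <;> fin_cases j <;>
    simp [Lfac, Phi1mat, Phi2mat, Phi3mat, B2mat, Matrix.mul_apply, Fin.sum_univ_three] <;> ring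

lemma Rfac_row (δ₁ δ₂ δ₃ δ₄ : ℝ) :
    Rfac δ₁ δ₂ δ₃ δ₄ 0 0 = (Real.cos δ₄ : ℂ) * cexp (δ₂ * I) ∧
    Rfac δ₁ δ₂ δ₃ δ₄ 0 1 = I * (Real.sin δ₄ : ℂ) * ((Real.cos δ₃ : ℂ) * cexp (δ₁ * I)) ∧
    Rfac δ₁ δ₂ δ₃ δ₄ 0 2 = -((Real.sin δ₄ : ℂ) * (Real.sin δ₃ : ℂ)) := by
  refine ⟨?_, ?_, ?_⟩
  · simp [Rfac, Phi1mat, Phi2mat, B1mat, B2mat, Matrix.mul_apply, Fin.sum_univ_three]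
  · simp [Rfac, Phi1mat, Phi2mat, B1mat, B2mat, Matrix.mul_apply, Fin.sum_univ_three]; ring
  · simp [Rfac, Phi1mat, Phi2mat, B1mat, B2mat, Matrix.mul_apply, Fin.sum_univ_three]
    linear_combination Complex.sin δ₄ * Complex.sin δ₃ * I_mul_I

lemma LR_row (δ₅ δ₆ δ₇ δ₈ δ₉ : ℝ) (R : Matrix (Fin 3) (Fin 3) ℂ) (j : Fin 3) :
    (Lfac δ₅ δ₆ δ₇ δ₈ δ₉ * R) 0 j = cexp (δ₇ * I) * R 0 j := by
  rw [Lfac_eq, Matrix.mul_apply, Fin.sum_univ_three]; simp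

lemma normsq_aux (z : ℂ) : z * (starRingEnd ℂ) z = ((‖z‖ ^ 2 : ℝ) : ℂ) := by
  rw [Complex.mul_conj, Complex.normSq_eq_norm_sq]

lemma decomp_exists (U : Matrix (Fin 3) (Fin 3) ℂ) (hU : U ∈ Matrix.unitaryGroup (Fin 3) ℂ) :
    ∃ δ₁ δ₂ δ₃ δ₄ δ₅ δ₆ δ₇ δ₈ δ₉ : ℝ,
        δ₁ ∈ Set.Ico 0 Real.pi ∧ δ₂ ∈ Set.Ico 0 Real.pi ∧ δ₃ ∈ Set.Ico 0 Real.pi ∧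
        δ₄ ∈ Set.Ico 0 Real.pi ∧ δ₅ ∈ Set.Ico 0 Real.pi ∧ δ₆ ∈ Set.Ico 0 Real.pi ∧
        δ₇ ∈ Set.Ico 0 (2 * Real.pi) ∧ δ₈ ∈ Set.Ico 0 (2 * Real.pi) ∧
        δ₉ ∈ Set.Ico 0 (2 * Real.pi) ∧
        ((δ₃ = 0 ∨ δ₃ = Real.pi / 2) → δ₁ = 0) ∧
        ((δ₄ = 0 ∨ δ₄ = Real.pi / 2) → δ₂ = 0) ∧
        (δ₄ = 0 → δ₃ = 0) ∧
        ((δ₆ = 0 ∨ δ₆ = Real.pi / 2) → δ₅ = 0) ∧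
        U = Lfac δ₅ δ₆ δ₇ δ₈ δ₉ * Rfac δ₁ δ₂ δ₃ δ₄ := by
  have ent : ∀ {V : Matrix (Fin 3) (Fin 3) ℂ}, V ∈ Matrix.unitaryGroup (Fin 3) ℂ → ∀ i j,
      V i 0 * star (V j 0) + V i 1 * star (V j 1) + V i 2 * star (V j 2)
        = (1 : Matrix (Fin 3) (Fin 3) ℂ) i j := by
    intro V hV i j
    rw [Matrix.mem_unitaryGroup_iff] at hV
    rw [← hV, Matrix.mul_apply, Fin.sum_univ_three]; rfl
  obtain ⟨δ₁, δ₂, δ₃, δ₄, δ₇, h1, h2, h3, h4, h7, p1, p2, p3, ea, eb, ec⟩ :=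
    row_exists (U 0 0) (U 0 1) (U 0 2) (by
      have := ent hU 0 0
      simp only [RCLike.star_def, normsq_aux, Matrix.one_apply_eq] at this
      exact_mod_cast this)
  obtain ⟨r0, r1, r2⟩ := Rfac_row δ₁ δ₂ δ₃ δ₄
  have hR := Rfac_unitary δ₁ δ₂ δ₃ δ₄
  set R := Rfac δ₁ δ₂ δ₃ δ₄ with hRdef
  have hrow : ∀ j, U 0 j = cexp (δ₇ * I) * R 0 j := by
    intro j; fin_cases j
    · simp only [Fin.zero_eta]; rw [ea, r0]
    · simp only [Fin.mk_one]; rw [eb, r1]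
    · simp only [Fin.reduceFinMk]; rw [ec, r2]; ring
  have hV : U * star R ∈ Matrix.unitaryGroup (Fin 3) ℂ := mul_mem hU (Unitary.star_mem hR)
  have hVR : U = (U * star R) * R := by
    rw [Matrix.mul_assoc, Matrix.mem_unitaryGroup_iff'.mp hR, Matrix.mul_one]
  have hV0 : ∀ j, (U * star R) 0 j = cexp (δ₇ * I) * (1 : Matrix (Fin 3) (Fin 3) ℂ) 0 j := by
    intro j
    rw [← Matrix.mem_unitaryGroup_iff.mp hR, Matrix.mul_apply, Matrix.mul_apply, Finset.mul_sum]
    simp only [hrow, mul_assoc]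
  set V := U * star R with hVdef
  have v00 : V 0 0 = cexp (δ₇ * I) := by rw [hV0]; simp
  have v01 : V 0 1 = 0 := by rw [hV0]; simp
  have v02 : V 0 2 = 0 := by rw [hV0]; simp
  have v10 : V 1 0 = 0 := by
    have := ent hV 1 0
    rw [v00, v01, v02] at this; simpa using this
  have v20 : V 2 0 = 0 := by
    have := ent hV 2 0
    rw [v00, v01, v02] at this; simpa using this
  obtain ⟨δ₅, δ₆, δ₈, δ₉, h5, h6, h8, h9, p4, e1, e2, e3, e4⟩ :=
    block_exists (V 1 1) (V 1 2) (V 2 1) (V 2 2)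
      (by
        have := ent hV 1 1
        simp only [v10, zero_mul, zero_add, RCLike.star_def, normsq_aux, Matrix.one_apply_eq] at this
        exact_mod_cast this)
      (by
        have := ent hV 2 2
        simp only [v20, zero_mul, zero_add, RCLike.star_def, normsq_aux, Matrix.one_apply_eq] at this
        exact_mod_cast this)
      (by
        have := ent hV 1 2
        rw [v10] at this
        simpa using this)
  refine ⟨δ₁, δ₂, δ₃, δ₄, δ₅, δ₆, δ₇, δ₈, δ₉, h1, h2, h3, h4, h5, h6, h7, h8, h9, p1, p2, p3, p4, ?_⟩
  have : V = Lfac δ₅ δ₆ δ₇ δ₈ δ₉ := by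
    rw [Lfac_eq, ← e1, ← e2, ← e3, ← e4, ← v00]
    ext i j
    fin_cases i <;> fin_cases j <;> simp [v01, v02, v10, v20]
  rw [← this]; exact hVR

lemma rhs_eq (δ₁ δ₂ δ₃ δ₄ δ₅ δ₆ δ₇ δ₈ δ₉ : ℝ) :
    Phi3mat δ₉ * Phi2mat δ₈ * Phi1mat δ₇ * B2mat δ₆ * Phi2mat δ₅ *
      B1mat δ₄ * B2mat δ₃ * Phi1mat δ₂ * Phi2mat δ₁ =
    Lfac δ₅ δ₆ δ₇ δ₈ δ₉ * Rfac δ₁ δ₂ δ₃ δ₄ := by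
  simp only [Lfac, Rfac, Matrix.mul_assoc]

/-- Existence and uniqueness of the parameters in the three-mode
linear-optical Euler axiom (G). -/
theorem lopp_euler_3mode (γ₁ γ₂ γ₃ γ₄ : ℝ) :
    ∃! δ : ℝ × ℝ × ℝ × ℝ × ℝ × ℝ × ℝ × ℝ × ℝ, match δ with
      | (δ₁, δ₂, δ₃, δ₄, δ₅, δ₆, δ₇, δ₈, δ₉) =>
        δ₁ ∈ Set.Ico 0 Real.pi ∧ δ₂ ∈ Set.Ico 0 Real.pi ∧ δ₃ ∈ Set.Ico 0 Real.pi ∧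
        δ₄ ∈ Set.Ico 0 Real.pi ∧ δ₅ ∈ Set.Ico 0 Real.pi ∧ δ₆ ∈ Set.Ico 0 Real.pi ∧
        δ₇ ∈ Set.Ico 0 (2 * Real.pi) ∧ δ₈ ∈ Set.Ico 0 (2 * Real.pi) ∧
        δ₉ ∈ Set.Ico 0 (2 * Real.pi) ∧
        ((δ₃ = 0 ∨ δ₃ = Real.pi / 2) → δ₁ = 0) ∧
        ((δ₄ = 0 ∨ δ₄ = Real.pi / 2) → δ₂ = 0) ∧
        (δ₄ = 0 → δ₃ = 0) ∧
        ((δ₆ = 0 ∨ δ₆ = Real.pi / 2) → δ₅ = 0) ∧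
        B1mat γ₄ * B2mat γ₃ * Phi1mat γ₂ * B1mat γ₁
          = Phi3mat δ₉ * Phi2mat δ₈ * Phi1mat δ₇ * B2mat δ₆ * Phi2mat δ₅ *
            B1mat δ₄ * B2mat δ₃ * Phi1mat δ₂ * Phi2mat δ₁ := by
  have hU : B1mat γ₄ * B2mat γ₃ * Phi1mat γ₂ * B1mat γ₁ ∈ Matrix.unitaryGroup (Fin 3) ℂ :=
    mul_mem (mul_mem (mul_mem (B1_unitary _) (B2_unitary _)) (Phi1_unitary _)) (B1_unitary _)
  obtain ⟨δ₁, δ₂, δ₃, δ₄, δ₅, δ₆, δ₇, δ₈, δ₉, h1, h2, h3, h4, h5, h6, h7, h8, h9, p1, p2, p3, p4, e⟩ :=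
    decomp_exists _ hU
  refine ⟨(δ₁, δ₂, δ₃, δ₄, δ₅, δ₆, δ₇, δ₈, δ₉),
    ⟨h1, h2, h3, h4, h5, h6, h7, h8, h9, p1, p2, p3, p4, by rw [rhs_eq]; exact e⟩, ?_⟩
  rintro ⟨η₁, η₂, η₃, η₄, η₅, η₆, η₇, η₈, η₉⟩
    ⟨k1, k2, k3, k4, k5, k6, k7, k8, k9, q1, q2, q3, q4, e'⟩
  rw [rhs_eq, e] at e'
  obtain ⟨r0, r1, r2⟩ := Rfac_row δ₁ δ₂ δ₃ δ₄
  obtain ⟨s0, s1, s2⟩ := Rfac_row η₁ η₂ η₃ η₄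
  have c0 := congrFun (congrFun e' 0) 0
  have c1 := congrFun (congrFun e' 0) 1
  have c2 := congrFun (congrFun e' 0) 2
  rw [LR_row, LR_row, r0, s0] at c0
  rw [LR_row, LR_row, r1, s1] at c1
  rw [LR_row, LR_row, r2, s2, mul_neg, mul_neg] at c2
  obtain ⟨rfl, rfl, rfl, rfl, rfl⟩ :=
    row_unique h1 h2 h3 h4 h7 p1 p2 p3 k1 k2 k3 k4 k7 q1 q2 q3 c0 c1 c2
  have hR := Matrix.mem_unitaryGroup_iff.mp (Rfac_unitary δ₁ δ₂ δ₃ δ₄)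
  have hL : Lfac δ₅ δ₆ δ₇ δ₈ δ₉ = Lfac η₅ η₆ δ₇ η₈ η₉ := by
    have := congrArg (fun M => M * star (Rfac δ₁ δ₂ δ₃ δ₄)) e'
    simpa only [Matrix.mul_assoc, hR, Matrix.mul_one] using this
  rw [Lfac_eq, Lfac_eq] at hL
  have d1 := congrFun (congrFun hL 1) 1
  have d2 := congrFun (congrFun hL 1) 2
  have d3 := congrFun (congrFun hL 2) 1
  have d4 := congrFun (congrFun hL 2) 2
  obtain ⟨rfl, rfl, rfl, rfl⟩ :=
    block_unique h5 h6 h8 h9 p4 k5 k6 k8 k9 q4 d1 d2 d3 d4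
  rfl

end
end
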